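/- arXiv:2510.27670 — 4 statements merged into one kernel-verified Lean document; each statement's English description precedes it below -/
import Mathlib

section
/- Let A₁, A₂, A₃ be hermitian 4×4 complex matrices whose joint numerical range W = W(A₁,A₂,A₃) has dimension 3. If G₁, G₂, G₃ are three mutually distinct one-dimensional nonexposed faces of W, then G₁ ∩ G₂ ∩ G₃ = ∅. -/
open Matrix ComplexOrder

noncomputable section

/-- A density matrix: positive semidefinite with unit trace. -/
def IsDensity {n : Type*} [Fintype n] (ρ : Matrix n n ℂ) : Prop :=
  ρ.PosSemidef ∧ ρ.trace = 1

/-- The measurement map `ρ ↦ (tr ρA₁, …, tr ρA_k)` (the traces are real for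
hermitian matrices). -/
def wpt {n : Type*} [Fintype n] {k : ℕ} (A : Fin k → Matrix n n ℂ)
    (ρ : Matrix n n ℂ) : Fin k → ℝ :=
  fun i => ((ρ * A i).trace).re

/-- The joint numerical range of `k` matrices. -/
def JNR {n : Type*} [Fintype n] {k : ℕ} (A : Fin k → Matrix n n ℂ) :
    Set (Fin k → ℝ) :=
  wpt A '' {ρ | IsDensity ρ}

/-- `F` is a face of the convex set `C`: a convex subset such that whenever an
open segment between two points of `C` meets `F`, both endpoints lie in `F`. -/
def IsFaceOf {E : Type*} [AddCommGroup E] [Module ℝ E] (C F : Set E) : Prop :=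
  Convex ℝ F ∧ IsExtreme ℝ C F

/-- The dimension of a convex set: the dimension of its affine hull. -/
def convDim {E : Type*} [AddCommGroup E] [Module ℝ E] (F : Set E) : ℕ :=
  Module.finrank ℝ (affineSpan ℝ F).direction

/-- Euclidean dot product on `Fin d → ℝ`. -/
def dotR {d : ℕ} (u v : Fin d → ℝ) : ℝ := ∑ i, u i * v i

/-- `F` is an exposed face of `C`: the set of minimizers of a linear functional. -/
def IsExposedFace {d : ℕ} (C F : Set (Fin d → ℝ)) : Prop :=
  ∃ u : Fin d → ℝ, F = {x ∈ C | ∀ y ∈ C, dotR u x ≤ dotR u y}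

/-- The normal cone of `C` at `p`. -/
def normalConeAt {d : ℕ} (C : Set (Fin d → ℝ)) (p : Fin d → ℝ) :
    Set (Fin d → ℝ) :=
  {u | ∀ y ∈ C, 0 ≤ dotR (y - p) u}

/-- `p` is a corner point of `C` if the normal cone of `C` at `p` spans `ℝ^d`. -/
def IsCornerPoint {d : ℕ} (C : Set (Fin d → ℝ)) (p : Fin d → ℝ) : Prop :=
  p ∈ C ∧ Submodule.span ℝ (normalConeAt C p) = ⊤

/-- The closed unit disk of `ℝ²`. -/
def unitDisk2 : Set (Fin 2 → ℝ) := {v | v 0 ^ 2 + v 1 ^ 2 ≤ 1}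

/-- An elliptic disk in `ℝ³`: the image of the closed unit disk of `ℝ²` under an
injective affine map. -/
def IsEllipticDisk (F : Set (Fin 3 → ℝ)) : Prop :=
  ∃ f : (Fin 2 → ℝ) →ᵃ[ℝ] (Fin 3 → ℝ), Function.Injective f ∧ F = f '' unitDisk2

/-- A non-elliptic face of `W`: a two-dimensional face that is not an elliptic
disk. -/
def IsNonEllipticFace (W F : Set (Fin 3 → ℝ)) : Prop :=
  IsFaceOf W F ∧ convDim F = 2 ∧ ¬ IsEllipticDisk F

/-- A rank-3 face of the joint numerical range of `A`. -/
def IsRank3Face {k : ℕ} (A : Fin k → Matrix (Fin 4) (Fin 4) ℂ)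
    (F : Set (Fin k → ℝ)) : Prop :=
  F.Nonempty ∧ IsFaceOf (JNR A) F ∧
    ∃ P : Matrix (Fin 4) (Fin 4) ℂ, Pᴴ = P ∧ P * P = P ∧ P.rank = 3 ∧
      ∀ ρ : Matrix (Fin 4) (Fin 4) ℂ, IsDensity ρ → (wpt A ρ ∈ F ↔ P * ρ * P = ρ)

/-!
Let `W` be a three-dimensional convex set and let `G` be a nonexposed edge of `W`. Any supporting
plane along `G` cuts out an exposed face `F` strictly between `G` and `W`, hence of dimension two.

Three faces `Fᵢ` of a convex set `C`, none of which contains another, force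
`dim (⋂ Fᵢ) + 3 ≤ dim C`. Otherwise, given `p` in the relative interior of `⋂ Fᵢ` and `xᵢ` in that
of `Fᵢ`, the vectors `xᵢ - p` are linearly dependent modulo the span of `⋂ Fᵢ - p`. Two of the three
coefficients of the relation have the same sign (in the weak sense), and the relation then places
one of these two points `xᵢ` in the face of the third. Thus at most two edges of a planar convex
set meet in a point, and if three two-dimensional faces meet in an edge, then `4 ≤ dim W`.

Suppose that three nonexposed edges `Gᵢ` meet in `p`, and that no `Fᵢ ∩ Fⱼ` lies in `Gᵢ`. If
`Fᵢ ≠ Fⱼ`, then `Fᵢ ∩ Fⱼ` is an exposed edge of `Fᵢ` through `p`, and `Fᵢ` has no room for two such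
edges besides `Gᵢ`. This forces the `Fᵢ` to be distinct and to meet in a common edge, which is
impossible in dimension three.

That `Fᵢ ∩ Fⱼ` is not contained in `Gᵢ` is where the size of the matrices enters. Faces of the joint
numerical range correspond to subspaces of `ℂ⁴`, compatibly with inclusions and intersections, and
an edge needs a subspace of dimension at least two. So `Gᵢ` and `Fᵢ` have subspaces of dimension
two and three, two of the latter meet in dimension at least two, and `Fᵢ ∩ Fⱼ ⊆ Gᵢ` would make
`Gᵢ = Fᵢ ∩ Fⱼ` exposed.
-/

section FeasibleDirections

variable {E : Type*} [AddCommGroup E] [Module ℝ E] {C F G : Set E} {p x y z : E}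

/-- The cone of feasible directions of `C` at `p`: those along which one can move a positive
distance from `p` and land in `C`. For convex `C` this is the cone generated by `C - p`. -/
def feasibleDirections (C : Set E) (p : E) : Set E :=
  {d | ∃ t : ℝ, 0 < t ∧ p + t • d ∈ C}

lemma feasibleDirections_mono (h : F ⊆ C) : feasibleDirections F p ⊆ feasibleDirections C p :=
  fun _ ⟨t, ht, hd⟩ => ⟨t, ht, h hd⟩

lemma sub_mem_feasibleDirections (hx : x ∈ C) : x - p ∈ feasibleDirections C p :=
  ⟨1, one_pos, by simpa using hx⟩

lemma smul_mem_feasibleDirections (hp : p ∈ C) {d : E} (hd : d ∈ feasibleDirections C p) {a : ℝ}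
    (ha : 0 ≤ a) : a • d ∈ feasibleDirections C p := by
  obtain ⟨t, ht, htd⟩ := hd
  rcases ha.eq_or_lt with rfl | ha
  · exact ⟨1, one_pos, by simpa using hp⟩
  · refine ⟨t / a, div_pos ht ha, ?_⟩
    rwa [smul_smul, div_mul_cancel₀ t ha.ne']

lemma add_smul_mem_of_le (hC : Convex ℝ C) (hp : p ∈ C) {d : E} {s t : ℝ} (hs : 0 < s)
    (hst : s ≤ t) (h : p + t • d ∈ C) : p + s • d ∈ C := by
  have ht := hs.trans_le hst
  have := hC.add_smul_mem hp h ⟨(div_pos hs ht).le, (div_le_one ht).2 hst⟩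
  rwa [smul_smul, div_mul_cancel₀ s ht.ne'] at this

lemma exists_common_step (hC : Convex ℝ C) (hp : p ∈ C) {d e : E}
    (hd : d ∈ feasibleDirections C p) (he : e ∈ feasibleDirections C p) :
    ∃ t : ℝ, 0 < t ∧ p + t • d ∈ C ∧ p + t • e ∈ C := by
  obtain ⟨s, hs, hsd⟩ := hd
  obtain ⟨t, ht, hte⟩ := he
  have hst := lt_min hs ht
  exact ⟨min s t, hst, add_smul_mem_of_le hC hp hst (min_le_left s t) hsd,
    add_smul_mem_of_le hC hp hst (min_le_right s t) hte⟩

lemma midpoint_add_smul_eq (p d e : E) (t : ℝ) :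
    (1 / 2 : ℝ) • (p + t • d) + (1 / 2 : ℝ) • (p + t • e) = p + (t / 2) • (d + e) := by
  module

lemma add_mem_feasibleDirections (hC : Convex ℝ C) (hp : p ∈ C) {d e : E}
    (hd : d ∈ feasibleDirections C p) (he : e ∈ feasibleDirections C p) :
    d + e ∈ feasibleDirections C p := by
  obtain ⟨t, ht, htd, hte⟩ := exists_common_step hC hp hd he
  refine ⟨t / 2, half_pos ht, ?_⟩
  rw [← midpoint_add_smul_eq]
  exact hC htd hte (by norm_num) (by norm_num) (by norm_num)

namespace IsFaceOf

lemma mem_of_sub_mem_feasibleDirections (hF : IsFaceOf C F) (hp : p ∈ F) (hx : x ∈ C)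
    (h : x - p ∈ feasibleDirections F p) : x ∈ F := by
  obtain ⟨t, ht, htx⟩ := h
  obtain ht1 | ht1 := lt_or_ge t 1
  · refine hF.2.right_mem_of_mem_openSegment (hF.2.subset hp) hx htx
      ⟨1 - t, t, sub_pos.2 ht1, ht, sub_add_cancel 1 t, by module⟩
  · have := hF.1.add_smul_mem hp htx ⟨inv_nonneg.2 ht.le, inv_le_one_of_one_le₀ ht1⟩
    rwa [inv_smul_smul₀ ht.ne', add_sub_cancel] at this

lemma mem_of_rev_sub_mem_feasibleDirections (hF : IsFaceOf C F) (hp : p ∈ F) (hx : x ∈ C)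
    (h : p - x ∈ feasibleDirections C p) : x ∈ F := by
  obtain ⟨t, ht, htx⟩ := h
  refine hF.2.left_mem_of_mem_openSegment hx htx hp
    ⟨t / (1 + t), 1 / (1 + t), by positivity, by positivity, by field_simp; ring, ?_⟩
  match_scalars
  · field_simp
    ring
  · field_simp

lemma left_mem_feasibleDirections_of_add_mem (hC : Convex ℝ C) (hF : IsFaceOf C F) (hp : p ∈ F)
    {d e : E} (hd : d ∈ feasibleDirections C p) (he : e ∈ feasibleDirections C p)
    (hde : d + e ∈ feasibleDirections F p) : d ∈ feasibleDirections F p := by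
  have hpC := hF.2.subset hp
  obtain ⟨t, ht, htd, hte⟩ := exists_common_step hC hpC hd he
  obtain ⟨s, hs, hsde⟩ := hde
  have hr : 0 < min t (2 * s) := lt_min ht (mul_pos two_pos hs)
  have hrd := add_smul_mem_of_le hC hpC hr (min_le_left t (2 * s)) htd
  have hre := add_smul_mem_of_le hC hpC hr (min_le_left t (2 * s)) hte
  have hrde : p + (min t (2 * s) / 2) • (d + e) ∈ F :=
    add_smul_mem_of_le hF.1 hp (half_pos hr) (by linarith [min_le_right t (2 * s)]) hsde
  exact ⟨min t (2 * s), hr, hF.2.left_mem_of_mem_openSegment hrd hre hrde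
    ⟨1 / 2, 1 / 2, one_half_pos, one_half_pos, add_halves 1, midpoint_add_smul_eq p d e _⟩⟩

lemma mem_of_smul_add_smul_add_smul_mem (hC : Convex ℝ C) (hF : IsFaceOf C F) (hp : p ∈ F)
    (hx : x ∈ C) (hy : y ∈ C) (hz : z ∈ F) {a b c : ℝ} (ha : 0 < a) (hb : 0 ≤ b)
    (h : a • (x - p) + b • (y - p) + c • (z - p) ∈ feasibleDirections F p) : x ∈ F := by
  have hpC := hF.2.subset hp
  -- Moving the negative part of `c` to the right-hand side leaves a sum of feasible directions of
  -- `C` on the left.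
  have hxy : a • (x - p) + (b • (y - p) + c⁺ • (z - p)) ∈ feasibleDirections F p := by
    have hz' : c⁻ • (z - p) ∈ feasibleDirections F p :=
      smul_mem_feasibleDirections hp (sub_mem_feasibleDirections hz) (negPart_nonneg c)
    convert add_mem_feasibleDirections hF.1 hp h hz' using 1
    nth_rw 2 [← posPart_sub_negPart c]
    module
  have hax : a • (x - p) ∈ feasibleDirections F p := by
    refine hF.left_mem_feasibleDirections_of_add_mem hC hp ?_ ?_ hxy
    · exact smul_mem_feasibleDirections hpC (sub_mem_feasibleDirections hx) ha.le
    · exact add_mem_feasibleDirections hC hpC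
        (smul_mem_feasibleDirections hpC (sub_mem_feasibleDirections hy) hb)
        (smul_mem_feasibleDirections hpC (sub_mem_feasibleDirections (hF.2.subset hz))
          (posPart_nonneg c))
  refine hF.mem_of_sub_mem_feasibleDirections hp hx ?_
  have := smul_mem_feasibleDirections hp hax (inv_nonneg.2 ha.le)
  rwa [inv_smul_smul₀ ha.ne'] at this

lemma inter (hF : IsFaceOf C F) (hG : IsFaceOf C G) : IsFaceOf C (F ∩ G) :=
  ⟨hF.1.inter hG.1, hF.2.inter hG.2⟩

lemma mono {D : Set E} (hF : IsFaceOf C F) (hDC : D ⊆ C) (hFD : F ⊆ D) : IsFaceOf D F :=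
  ⟨hF.1, hF.2.mono hDC hFD⟩

end IsFaceOf
end FeasibleDirections

section ConvDim

variable {E : Type*} [AddCommGroup E] [Module ℝ E]

lemma convDim_eq_finrank_vectorSpan (F : Set E) :
    convDim F = Module.finrank ℝ (vectorSpan ℝ F) := by
  rw [convDim, direction_affineSpan]

lemma convDim_pos_iff [FiniteDimensional ℝ E] {F : Set E} : 0 < convDim F ↔ F.Nontrivial := by
  rw [convDim_eq_finrank_vectorSpan, Module.finrank_pos_iff, Submodule.nontrivial_iff_ne_bot,
    Ne, vectorSpan_eq_bot_iff_subsingleton]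
  exact Set.not_subsingleton_iff

end ConvDim

lemma IsFaceOf.of_isExposed {E : Type*} [AddCommGroup E] [Module ℝ E] [TopologicalSpace E]
    {C F : Set E} (hC : Convex ℝ C) (hF : IsExposed ℝ C F) : IsFaceOf C F :=
  ⟨hF.convex hC, hF.isExtreme⟩

section RelativeInterior

variable {E : Type*} [AddCommGroup E] [Module ℝ E] [TopologicalSpace E] [IsTopologicalAddGroup E]
  [ContinuousSMul ℝ E] {C F S : Set E} {x : E}

lemma mem_feasibleDirections_of_mem_vectorSpan (hx : x ∈ intrinsicInterior ℝ S) {d : E}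
    (hd : d ∈ vectorSpan ℝ S) : d ∈ feasibleDirections S x := by
  obtain ⟨y, hy, rfl⟩ := mem_intrinsicInterior.1 hx
  have hmem (t : ℝ) : (y : E) + t • d ∈ affineSpan ℝ S := by
    rw [add_comm]
    refine AffineSubspace.vadd_mem_of_mem_direction ?_ y.2
    rw [direction_affineSpan]
    exact Submodule.smul_mem _ t hd
  let line : ℝ → affineSpan ℝ S := fun t => ⟨y + t • d, hmem t⟩
  have hline : Continuous line := Continuous.subtype_mk (by fun_prop) hmem
  have hline0 : line 0 = y := Subtype.ext (by simp [line])
  have hnear : ∀ᶠ t in nhds (0 : ℝ), (y : E) + t • d ∈ S :=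
    hline.continuousAt.eventually (by rw [hline0]; exact mem_interior_iff_mem_nhds.1 hy)
  obtain ⟨t, htS, ht⟩ :=
    ((hnear.filter_mono nhdsWithin_le_nhds).and (self_mem_nhdsWithin (s := Set.Ioi 0))).exists
  exact ⟨t, ht, htS⟩

namespace IsFaceOf

lemma subset_of_mem_intrinsicInterior (hF : IsFaceOf C F) (hS : S ⊆ C)
    (hx : x ∈ intrinsicInterior ℝ S) (hxF : x ∈ F) : S ⊆ F := by
  intro y hy
  refine hF.mem_of_rev_sub_mem_feasibleDirections hxF (hS hy) (feasibleDirections_mono hS ?_)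
  exact mem_feasibleDirections_of_mem_vectorSpan hx
    (vsub_mem_vectorSpan ℝ (intrinsicInterior_subset hx) hy)

end IsFaceOf

end RelativeInterior

section LinearRelations

lemma exists_ne_zero_sum_smul_mem {K V ι : Type*} [DivisionRing K] [AddCommGroup V] [Module K V]
    [FiniteDimensional K V] [Fintype ι] {S T : Submodule K V} (hST : S ≤ T) {d : ι → V}
    (hd : ∀ i, d i ∈ T)
    (h : Module.finrank K T < Module.finrank K S + Fintype.card ι) :
    ∃ a : ι → K, a ≠ 0 ∧ ∑ i, a i • d i ∈ S := by
  let f : (S × (ι → K)) →ₗ[K] T :=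
    (Submodule.inclusion hST).coprod (Fintype.linearCombination K fun i => (⟨d i, hd i⟩ : T))
  have hker : LinearMap.ker f ≠ ⊥ :=
    LinearMap.ker_ne_bot_of_finrank_lt (by simpa using h)
  obtain ⟨⟨s, a⟩, hsa, hne⟩ := Submodule.exists_mem_ne_zero_of_ne_bot hker
  have hsum : (s : V) + ∑ i, a i • d i = 0 := by
    simpa [f, Fintype.linearCombination_apply] using congrArg Subtype.val hsa
  refine ⟨a, ?_, ?_⟩
  · rintro rfl
    exact hne (by simpa using hsum)
  · rw [eq_neg_of_add_eq_zero_right hsum]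
    exact S.neg_mem s.2

lemma exists_perm_pos_nonneg_or_neg_nonpos {a : Fin 3 → ℝ} (ha : a ≠ 0) :
    ∃ σ : Equiv.Perm (Fin 3), (0 < a (σ 0) ∧ 0 ≤ a (σ 1)) ∨ (a (σ 0) < 0 ∧ a (σ 1) ≤ 0) := by
  have hmono := Tuple.monotone_sort a
  set σ := Tuple.sort a
  have h01 : a (σ 0) ≤ a (σ 1) := hmono (by decide)
  have h12 : a (σ 1) ≤ a (σ 2) := hmono (by decide)
  by_cases hpos : 0 ≤ a (σ 1) ∧ 0 < a (σ 2)
  · exact ⟨Fin.revPerm.trans σ, .inl ⟨hpos.2, hpos.1⟩⟩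
  have h1 : a (σ 1) ≤ 0 := by grind
  refine ⟨σ, .inr ⟨lt_of_not_ge fun h0 => ha ?_, h1⟩⟩
  have hσ (i : Fin 3) : a (σ i) = 0 := by
    have h0i : a (σ 0) ≤ a (σ i) := hmono (Fin.zero_le i)
    have hi2 : a (σ i) ≤ a (σ 2) := hmono (Fin.le_last i)
    grind
  exact funext fun i => by simpa using hσ (σ.symm i)

end LinearRelations

section FaceDimension

variable {E : Type*} [NormedAddCommGroup E] [NormedSpace ℝ E] [FiniteDimensional ℝ E]
  {C F G H : Set E} {p : E}

namespace IsFaceOf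

lemma eq_of_convDim_le (hF : IsFaceOf C F) (hne : F.Nonempty)
    (h : convDim C ≤ convDim F) : F = C := by
  obtain ⟨x, hx⟩ := hne.intrinsicInterior hF.1
  rw [convDim_eq_finrank_vectorSpan, convDim_eq_finrank_vectorSpan] at h
  have hspan : vectorSpan ℝ F = vectorSpan ℝ C :=
    Submodule.eq_of_le_of_finrank_le (vectorSpan_mono ℝ hF.2.subset) h
  have hxF := intrinsicInterior_subset hx
  refine hF.2.subset.antisymm fun y hy => hF.mem_of_sub_mem_feasibleDirections hxF hy ?_
  refine mem_feasibleDirections_of_mem_vectorSpan hx ?_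
  rw [hspan]
  exact vsub_mem_vectorSpan ℝ hy (hF.2.subset hxF)

lemma eq_of_subset_of_convDim_le (hF : IsFaceOf C F) (hG : IsFaceOf C G)
    (hne : F.Nonempty) (hFG : F ⊆ G) (h : convDim G ≤ convDim F) : F = G :=
  (hF.mono hG.2.subset hFG).eq_of_convDim_le hne h

theorem convDim_iInter_add_three_le (hC : Convex ℝ C) {F : Fin 3 → Set E}
    (hF : ∀ i, IsFaceOf C (F i)) (hne : (⋂ i, F i).Nonempty)
    (hsub : Pairwise fun i j => ¬ F i ⊆ F j) : convDim (⋂ i, F i) + 3 ≤ convDim C := by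
  by_contra! hlt
  rw [convDim_eq_finrank_vectorSpan, convDim_eq_finrank_vectorSpan] at hlt
  obtain ⟨p, hp⟩ := hne.intrinsicInterior (convex_iInter fun i => (hF i).1)
  have hpF := Set.mem_iInter.1 (intrinsicInterior_subset hp)
  have hxF (i : Fin 3) : ∃ x, x ∈ intrinsicInterior ℝ (F i) :=
    Set.Nonempty.intrinsicInterior (hF i).1 ⟨p, hpF i⟩
  choose x hx using hxF
  have hxF (i : Fin 3) : x i ∈ F i := intrinsicInterior_subset (hx i)
  have hxC (i : Fin 3) : x i ∈ C := (hF i).2.subset (hxF i)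
  have hnot (σ : Equiv.Perm (Fin 3)) (a : Fin 3 → ℝ) (h0 : 0 < a (σ 0)) (h1 : 0 ≤ a (σ 1)) :
      ∑ i, a i • (x i - p) ∉ vectorSpan ℝ (⋂ i, F i) := by
    intro ha
    have hsum := mem_feasibleDirections_of_mem_vectorSpan hp ha
    rw [← Equiv.sum_comp σ, Fin.sum_univ_three] at hsum
    have hx02 : x (σ 0) ∈ F (σ 2) :=
      (hF (σ 2)).mem_of_smul_add_smul_add_smul_mem hC (hpF _) (hxC _) (hxC _) (hxF _) h0 h1
        (feasibleDirections_mono (Set.iInter_subset F _) hsum)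
    exact hsub (σ.injective.ne (by decide : (0 : Fin 3) ≠ 2))
      ((hF _).subset_of_mem_intrinsicInterior (hF _).2.subset (hx _) hx02)
  obtain ⟨a, ha, hsum⟩ := exists_ne_zero_sum_smul_mem
    (vectorSpan_mono ℝ ((Set.iInter_subset F 0).trans (hF 0).2.subset))
    (fun i => vsub_mem_vectorSpan ℝ (hxC i) ((hF i).2.subset (hpF i)))
    (by simpa using hlt)
  obtain ⟨σ, ⟨h0, h1⟩ | ⟨h0, h1⟩⟩ := exists_perm_pos_nonneg_or_neg_nonpos ha
  · exact hnot σ a h0 h1 hsum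
  · refine hnot σ (-a) (neg_pos.2 h0) (neg_nonneg.2 h1) ?_
    simpa [neg_smul, Finset.sum_neg_distrib] using hsum

theorem convDim_iInter_add_three_le_of_injective (hC : Convex ℝ C) {F : Fin 3 → Set E}
    (hF : ∀ i, IsFaceOf C (F i)) (hne : (⋂ i, F i).Nonempty)
    (hdim : ∀ i j, convDim (F i) ≤ convDim (F j)) (hinj : Function.Injective F) :
    convDim (⋂ i, F i) + 3 ≤ convDim C :=
  convDim_iInter_add_three_le hC hF hne fun i j hij hsub => hinj.ne hij <|
    (hF i).eq_of_subset_of_convDim_le (hF j) (hne.mono (Set.iInter_subset F i)) hsub (hdim j i)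

lemma eq_of_convDim_le_two (hC : Convex ℝ C) (hC2 : convDim C ≤ 2)
    (hF : IsFaceOf C F) (hF1 : convDim F = 1) (hpF : p ∈ F)
    (hG : IsFaceOf C G) (hG1 : convDim G = 1) (hpG : p ∈ G)
    (hH : IsFaceOf C H) (hH1 : convDim H = 1) (hpH : p ∈ H) (hFG : F ≠ G) (hFH : F ≠ H) :
    G = H := by
  by_contra hGH
  have := convDim_iInter_add_three_le_of_injective (F := ![F, G, H]) hC
    (by simp [Fin.forall_fin_succ, hF, hG, hH])
    ⟨p, by simp [Fin.forall_fin_succ, hpF, hpG, hpH]⟩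
    (by simp [Fin.forall_fin_succ, hF1, hG1, hH1])
    (List.nodup_ofFn.1 (by simp [hFG, hFH, hGH]))
  omega

end IsFaceOf

lemma IsFaceOf.exists_isExposed_superset (hC : Convex ℝ C)
    (hdim : convDim C = Module.finrank ℝ E) (hG : IsFaceOf C G) (hne : G.Nonempty) (hGC : G ≠ C) :
    ∃ F, IsExposed ℝ C F ∧ G ⊆ F ∧ F ≠ C := by
  have hint : (interior C).Nonempty := by
    rw [hC.interior_nonempty_iff_affineSpan_eq_top,
      ← AffineSubspace.direction_eq_top_iff_of_nonempty
        ((affineSpan_nonempty ℝ).2 (hne.mono hG.2.subset))]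
    exact Submodule.eq_top_of_finrank_eq hdim
  have hdisj : Disjoint (interior C) G := Set.disjoint_left.2 fun x hxC hxG => hGC <|
    hG.2.subset.antisymm <| hG.subset_of_mem_intrinsicInterior subset_rfl
      (interior_subset_intrinsicInterior hxC) hxG
  obtain ⟨f, u, hfC, hfG⟩ :=
    geometric_hahn_banach_open hC.interior isOpen_interior hG.1 hdisj
  have hfC' : ∀ y ∈ C, f y ≤ u := by
    have := closure_minimal (fun y hy => (hfC y hy).le : interior C ⊆ {y | f y ≤ u})
      (isClosed_Iic.preimage f.continuous)
    rw [hC.closure_interior_eq_closure_of_nonempty_interior hint] at this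
    exact subset_closure.trans this
  refine ⟨f.toExposed C, ContinuousLinearMap.toExposed.isExposed,
    fun x hx => ⟨hG.2.subset hx, fun y hy => (hfC' y hy).trans (hfG x hx)⟩, fun hFC => ?_⟩
  obtain ⟨x, hx⟩ := hint
  obtain ⟨y, hy⟩ := hne
  have hxF : x ∈ f.toExposed C := hFC.symm.subset (interior_subset hx)
  exact ((hfG y hy).trans (hxF.2 y (hG.2.subset hy))).not_gt (hfC x hx)

end FaceDimension

lemma isExposedFace_of_isExposed {d : ℕ} {C F : Set (Fin d → ℝ)} (h : IsExposed ℝ C F)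
    (hne : F.Nonempty) : IsExposedFace C F := by
  obtain ⟨f, rfl⟩ := h hne
  refine ⟨fun i => -f (fun j => if i = j then 1 else 0), ?_⟩
  have hdot (x : Fin d → ℝ) : dotR (fun i => -f (fun j => if i = j then 1 else 0)) x = -f x := by
    simpa [dotR, mul_comm] using (f.toLinearMap.pi_apply_eq_sum_univ x).symm
  simp only [hdot, neg_le_neg_iff]

/-- A nonexposed edge `G` of `W` together with an exposed two-dimensional face `F` of `W`
containing it. -/
structure IsNonexposedFlag {E : Type*} [AddCommGroup E] [Module ℝ E] [TopologicalSpace E]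
    (W G F : Set E) : Prop where
  isFaceOf : IsFaceOf W G
  convDim_edge : convDim G = 1
  not_isExposed : ¬ IsExposed ℝ W G
  isExposed : IsExposed ℝ W F
  convDim_facet : convDim F = 2
  subset : G ⊆ F

lemma IsFaceOf.exists_isNonexposedFlag {E : Type*} [NormedAddCommGroup E] [NormedSpace ℝ E]
    [FiniteDimensional ℝ E] {W G : Set E} (hE : Module.finrank ℝ E = 3) (hW : Convex ℝ W)
    (hdim : convDim W = 3) (hG : IsFaceOf W G) (hG1 : convDim G = 1)
    (hGne : ¬ IsExposed ℝ W G) : ∃ F, IsNonexposedFlag W G F := by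
  have hne : G.Nonempty := (convDim_pos_iff.1 (hG1.symm ▸ one_pos)).nonempty
  obtain ⟨F, hF, hGF, hFW⟩ := hG.exists_isExposed_superset hW (hdim.trans hE.symm) hne
    (by rintro rfl; omega)
  have hface := IsFaceOf.of_isExposed hW hF
  refine ⟨F, hG, hG1, hGne, hF, ?_, hGF⟩
  have hlt : convDim F < convDim W := by
    by_contra! h
    exact hFW (hface.eq_of_convDim_le (hne.mono hGF) h)
  have hgt : convDim G < convDim F := by
    by_contra! h
    exact hGne (hG.eq_of_subset_of_convDim_le hface hne hGF h ▸ hF)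
  omega

namespace IsNonexposedFlag

variable {E : Type*} [NormedAddCommGroup E] [NormedSpace ℝ E] [FiniteDimensional ℝ E]
  {W G G' F F' : Set E} {p : E}

lemma convDim_inter_eq_one (hW : Convex ℝ W) (h : IsNonexposedFlag W G F)
    (h' : IsNonexposedFlag W G' F') (hpG : p ∈ G) (hpF' : p ∈ F') (hne : F ≠ F')
    (hcut : ¬ F ∩ F' ⊆ G) : convDim (F ∩ F') = 1 := by
  have hF := IsFaceOf.of_isExposed hW h.isExposed
  have hF' := IsFaceOf.of_isExposed hW h'.isExposed
  have hp : p ∈ F ∩ F' := ⟨h.subset hpG, hpF'⟩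
  have hlt : convDim (F ∩ F') < 2 := by
    by_contra! hge
    have hFF' : F ∩ F' = F := (hF.inter hF').eq_of_subset_of_convDim_le hF ⟨p, hp⟩
      Set.inter_subset_left (h.convDim_facet.trans_le hge)
    exact hne (hF.eq_of_subset_of_convDim_le hF' ⟨p, h.subset hpG⟩ (Set.inter_eq_left.1 hFF')
      (h'.convDim_facet.trans h.convDim_facet.symm).le)
  have hpos : 0 < convDim (F ∩ F') := by
    obtain ⟨x, hx, hxG⟩ := Set.not_subset.1 hcut
    exact convDim_pos_iff.2 ⟨p, hp, x, hx, fun hpx => hxG (hpx ▸ hpG)⟩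
  omega

lemma exists_edge (hW : Convex ℝ W) (h : IsNonexposedFlag W G F) (h' : IsNonexposedFlag W G' F')
    (hp : p ∈ G) (hp' : p ∈ G') (hGG' : G ≠ G') (hcut : ¬ F ∩ F' ⊆ G) :
    ∃ H, IsFaceOf F H ∧ convDim H = 1 ∧ p ∈ H ∧ G ≠ H ∧
      (F = F' ∧ H = G' ∨ F ≠ F' ∧ H = F ∩ F') := by
  by_cases hFF' : F = F'
  · subst hFF'
    exact ⟨G', h'.isFaceOf.mono h.isExposed.subset h'.subset, h'.convDim_edge, hp', hGG',
      .inl ⟨rfl, rfl⟩⟩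
  · have hFF'exp := h.isExposed.inter h'.isExposed
    refine ⟨F ∩ F', (IsFaceOf.of_isExposed hW hFF'exp).mono h.isExposed.subset
      Set.inter_subset_left, h.convDim_inter_eq_one hW h' hp (h'.subset hp') hFF' hcut,
      ⟨h.subset hp, h'.subset hp'⟩, ?_, .inr ⟨hFF', rfl⟩⟩
    rintro rfl
    exact h.not_isExposed hFF'exp

lemma ne_and_ne_and_inter_eq_inter (hW : Convex ℝ W) {ι : Type*} {G F : ι → Set E}
    (h : ∀ i, IsNonexposedFlag W (G i) (F i)) (hp : ∀ i, p ∈ G i)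
    (hG : Function.Injective G) (hcut : ∀ i j, ¬ F i ∩ F j ⊆ G i)
    {i j k : ι} (hij : i ≠ j) (hik : i ≠ k) (hjk : j ≠ k) :
    F i ≠ F j ∧ F i ≠ F k ∧ F i ∩ F j = F i ∩ F k := by
  have hGi : IsFaceOf (F i) (G i) := (h i).isFaceOf.mono (h i).isExposed.subset (h i).subset
  obtain ⟨H, hH, hH1, hpH, hGH, hHj⟩ :=
    (h i).exists_edge hW (h j) (hp i) (hp j) (hG.ne hij) (hcut i j)
  obtain ⟨K, hK, hK1, hpK, hGK, hKk⟩ :=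
    (h i).exists_edge hW (h k) (hp i) (hp k) (hG.ne hik) (hcut i k)
  have hHK : H = K := IsFaceOf.eq_of_convDim_le_two ((h i).isExposed.convex hW)
    (h i).convDim_facet.le hGi (h i).convDim_edge (hp i) hH hH1 hpH hK hK1 hpK hGH hGK
  have hexp (l : ι) : IsExposed ℝ W (F i ∩ F l) := (h i).isExposed.inter (h l).isExposed
  rcases hHj with ⟨-, rfl⟩ | ⟨hFj, rfl⟩ <;> rcases hKk with ⟨-, rfl⟩ | ⟨hFk, rfl⟩
  · exact absurd hHK (hG.ne hjk)
  · exact absurd (hHK ▸ hexp k) (h j).not_isExposed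
  · exact absurd (hHK ▸ hexp j) (h k).not_isExposed
  · exact ⟨hFj, hFk, hHK⟩

theorem not_injective (hW : Convex ℝ W) (hdim : convDim W ≤ 3) {G F : Fin 3 → Set E}
    (h : ∀ i, IsNonexposedFlag W (G i) (F i)) (hp : ∀ i, p ∈ G i)
    (hcut : ∀ i j, ¬ F i ∩ F j ⊆ G i) : ¬ Function.Injective G := by
  intro hG
  obtain ⟨h01, h02, h012⟩ :=
    ne_and_ne_and_inter_eq_inter hW h hp hG hcut (i := 0) (j := 1) (k := 2)
      (by decide) (by decide) (by decide)
  obtain ⟨h12, -, -⟩ := ne_and_ne_and_inter_eq_inter hW h hp hG hcut (i := 1) (j := 2) (k := 0)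
      (by decide) (by decide) (by decide)
  have hinj : Function.Injective F := List.nodup_ofFn.1 (by simp [h01, h02, h12])
  have hInter : ⋂ i, F i = F 0 ∩ F 1 := by
    have h2 : F 0 ∩ F 1 ⊆ F 2 := h012.subset.trans Set.inter_subset_right
    refine (Set.subset_inter (Set.iInter_subset F 0) (Set.iInter_subset F 1)).antisymm
      (Set.subset_iInter fun i => ?_)
    fin_cases i
    exacts [Set.inter_subset_left, Set.inter_subset_right, h2]
  have hle := IsFaceOf.convDim_iInter_add_three_le_of_injective hW
    (fun i => IsFaceOf.of_isExposed hW (h i).isExposed)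
    ⟨p, Set.mem_iInter.2 fun i => (h i).subset (hp i)⟩
    (fun i j => ((h i).convDim_facet.trans (h j).convDim_facet.symm).le) hinj
  rw [hInter, (h 0).convDim_inter_eq_one hW (h 1) (hp 0) ((h 1).subset (hp 1)) h01
    (hcut 0 1)] at hle
  omega

end IsNonexposedFlag

section RankOne

variable {n : Type*}

lemma vecMulVec_add_add_vecMulVec_sub {R : Type*} [NonUnitalRing R] [StarRing R] (ψ φ : n → R) :
    vecMulVec (ψ + φ) (star (ψ + φ)) + vecMulVec (ψ - φ) (star (ψ - φ)) =
      2 • (vecMulVec ψ (star ψ) + vecMulVec φ (star φ)) := by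
  simp only [star_add, star_sub, vecMulVec_add, vecMulVec_sub, add_vecMulVec, sub_vecMulVec]
  abel

lemma vecMulVec_smul_star_smul (c : ℂ) (ψ : n → ℂ) :
    vecMulVec (c • ψ) (star (c • ψ)) = Complex.normSq c • vecMulVec ψ (star ψ) := by
  rw [star_smul, smul_vecMulVec, vecMulVec_smul, smul_smul, ← Complex.coe_smul]
  exact congrArg (· • vecMulVec ψ (star ψ)) (Complex.mul_conj c)

end RankOne

section JointNumericalRange

open scoped Pointwise

variable {n : Type*} [Fintype n] {k : ℕ} {A : Fin k → Matrix n n ℂ}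
  {F F' G G' : Set (Fin k → ℝ)} {ρ σ : Matrix n n ℂ} {ψ : n → ℂ}

lemma wpt_zero (A : Fin k → Matrix n n ℂ) : wpt A 0 = 0 := by
  ext i
  simp [wpt]

lemma wpt_add (A : Fin k → Matrix n n ℂ) (ρ σ : Matrix n n ℂ) :
    wpt A (ρ + σ) = wpt A ρ + wpt A σ := by
  ext i
  simp [wpt, add_mul]

lemma wpt_smul (A : Fin k → Matrix n n ℂ) (r : ℝ) (ρ : Matrix n n ℂ) :
    wpt A (r • ρ) = r • wpt A ρ := by
  ext i
  simp [wpt]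

lemma convex_jnr : Convex ℝ (JNR A) := by
  rintro _ ⟨ρ, ⟨hρ, hρ1⟩, rfl⟩ _ ⟨σ, ⟨hσ, hσ1⟩, rfl⟩ a b ha hb hab
  refine ⟨a • ρ + b • σ, ⟨(hρ.smul ha).add (hσ.smul hb), ?_⟩, by simp only [wpt_add, wpt_smul]⟩
  rw [trace_add, trace_smul, trace_smul, hρ1, hσ1, ← add_smul, hab, one_smul]

/-- The cone over the set of states that `wpt A` maps into `F`; the scaling by the trace
homogenizes the condition `wpt A ρ ∈ F`. -/
def preimageCone (A : Fin k → Matrix n n ℂ) (F : Set (Fin k → ℝ)) : Set (Matrix n n ℂ) :=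
  {ρ | ρ.PosSemidef ∧ wpt A ρ ∈ ρ.trace.re • F}

lemma IsDensity.mem_preimageCone_iff (hρ : IsDensity ρ) :
    ρ ∈ preimageCone A F ↔ wpt A ρ ∈ F := by
  simp [preimageCone, hρ.1, hρ.2]

lemma preimageCone_mono (h : F ⊆ G) : preimageCone A F ⊆ preimageCone A G :=
  fun _ hρ => ⟨hρ.1, Set.smul_set_mono h hρ.2⟩

lemma zero_mem_preimageCone (hne : F.Nonempty) : 0 ∈ preimageCone A F := by
  refine ⟨PosSemidef.zero, ?_⟩
  rw [wpt_zero, trace_zero, Complex.zero_re, Set.zero_smul_set hne]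
  exact Set.zero_mem_zero

lemma add_mem_preimageCone (hF : Convex ℝ F) (hρ : ρ ∈ preimageCone A F)
    (hσ : σ ∈ preimageCone A F) : ρ + σ ∈ preimageCone A F := by
  refine ⟨hρ.1.add hσ.1, ?_⟩
  rw [wpt_add, trace_add, Complex.add_re, hF.add_smul
    (Complex.nonneg_iff.1 hρ.1.trace_nonneg).1 (Complex.nonneg_iff.1 hσ.1.trace_nonneg).1]
  exact Set.add_mem_add hρ.2 hσ.2

lemma smul_mem_preimageCone {r : ℝ} (hr : 0 ≤ r) (hρ : ρ ∈ preimageCone A F) :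
    r • ρ ∈ preimageCone A F := by
  refine ⟨hρ.1.smul hr, ?_⟩
  rw [wpt_smul, trace_smul, Complex.smul_re, smul_eq_mul, mul_smul]
  exact Set.smul_mem_smul_set hρ.2

lemma mem_preimageCone_jnr (hρ : ρ.PosSemidef) (hne : (JNR A).Nonempty) :
    ρ ∈ preimageCone A (JNR A) := by
  have htr := Complex.nonneg_iff.1 hρ.trace_nonneg
  have htr' : ρ.trace = (ρ.trace.re : ℂ) := Complex.ext rfl htr.2.symm
  rcases htr.1.eq_or_lt with h0 | h0
  · have : ρ = 0 := by rw [← hρ.trace_eq_zero_iff, htr', ← h0, Complex.ofReal_zero]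
    exact this ▸ zero_mem_preimageCone hne
  · have hdens : IsDensity (ρ.trace.re⁻¹ • ρ) := by
      refine ⟨hρ.smul (inv_nonneg.2 h0.le), ?_⟩
      rw [trace_smul, htr']
      simp [h0.ne']
    have := smul_mem_preimageCone h0.le
      ((hdens.mem_preimageCone_iff (F := JNR A)).2 ⟨_, hdens, rfl⟩)
    rwa [smul_inv_smul₀ h0.ne'] at this

lemma preimageCone_inter_subset (hne : (F ∩ G).Nonempty) :
    preimageCone A F ∩ preimageCone A G ⊆ preimageCone A (F ∩ G) := by
  rintro ρ ⟨⟨hρ, hF⟩, -, hG⟩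
  refine ⟨hρ, ?_⟩
  rcases eq_or_ne ρ.trace.re 0 with h0 | h0
  · rw [h0, Set.zero_smul_set hne]
    rwa [h0, Set.zero_smul_set hne.left] at hF
  · rw [Set.smul_set_inter₀ h0]
    exact ⟨hF, hG⟩

lemma IsFaceOf.mem_smul_of_add_mem_add_smul {E : Type*} [AddCommGroup E] [Module ℝ E]
    {C F : Set E} (hF : IsFaceOf C F) (hne : F.Nonempty) {a b : ℝ} (ha : 0 ≤ a) (hb : 0 ≤ b)
    {x y : E} (hx : x ∈ a • C) (hy : y ∈ b • C) (hxy : x + y ∈ (a + b) • F) : x ∈ a • F := by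
  have hneC := hne.mono hF.2.subset
  rcases ha.eq_or_lt with rfl | ha
  · rw [Set.zero_smul_set hneC] at hx
    rwa [Set.zero_smul_set hne]
  rcases hb.eq_or_lt with rfl | hb
  · rw [Set.zero_smul_set hneC] at hy
    simpa [Set.mem_zero.1 hy] using hxy
  obtain ⟨x, hx, rfl⟩ := hx
  obtain ⟨y, hy, rfl⟩ := hy
  obtain ⟨z, hz, hzxy⟩ := hxy
  have hab := add_pos ha hb
  refine Set.smul_mem_smul_set (hF.2.left_mem_of_mem_openSegment hx hy hz
    ⟨a / (a + b), b / (a + b), div_pos ha hab, div_pos hb hab, by field_simp, ?_⟩)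
  rw [← inv_smul_smul₀ hab.ne' z, show (a + b) • z = a • x + b • y from hzxy]
  module

namespace IsFaceOf

lemma left_mem_preimageCone_of_add_mem (hF : IsFaceOf (JNR A) F) (hne : F.Nonempty)
    (hρ : ρ.PosSemidef) (hσ : σ.PosSemidef) (h : ρ + σ ∈ preimageCone A F) :
    ρ ∈ preimageCone A F := by
  have hneW := hne.mono hF.2.subset
  refine ⟨hρ, hF.mem_smul_of_add_mem_add_smul hne (Complex.nonneg_iff.1 hρ.trace_nonneg).1
    (Complex.nonneg_iff.1 hσ.trace_nonneg).1 (mem_preimageCone_jnr hρ hneW).2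
    (mem_preimageCone_jnr hσ hneW).2 ?_⟩
  rw [← wpt_add, ← Complex.add_re, ← trace_add]
  exact h.2

lemma mem_preimageCone_of_sum_mem (hF : IsFaceOf (JNR A) F) (hne : F.Nonempty) {ι : Type*}
    [Fintype ι] {ρ : ι → Matrix n n ℂ} (hρ : ∀ i, (ρ i).PosSemidef)
    (h : ∑ i, ρ i ∈ preimageCone A F) (i : ι) : ρ i ∈ preimageCone A F := by
  classical
  rw [← Finset.add_sum_erase _ _ (Finset.mem_univ i)] at h
  exact hF.left_mem_preimageCone_of_add_mem hne (hρ i) (posSemidef_sum _ fun j _ => hρ j) h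

end IsFaceOf

/-- The range of the face of the state space lying over `F`: the span of the vectors whose
rank-one projection is, up to scaling, a state that `wpt A` maps into `F`. -/
def faceSubspace (A : Fin k → Matrix n n ℂ) (F : Set (Fin k → ℝ)) : Submodule ℂ (n → ℂ) :=
  Submodule.span ℂ {ψ | vecMulVec ψ (star ψ) ∈ preimageCone A F}

lemma faceSubspace_mono (h : F ⊆ G) : faceSubspace A F ≤ faceSubspace A G :=
  Submodule.span_mono fun _ hψ => preimageCone_mono h hψ

namespace IsFaceOf

lemma mem_faceSubspace (hF : IsFaceOf (JNR A) F) (hne : F.Nonempty) :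
    ψ ∈ faceSubspace A F ↔ vecMulVec ψ (star ψ) ∈ preimageCone A F := by
  refine ⟨fun hψ => ?_, fun hψ => Submodule.subset_span hψ⟩
  induction hψ using Submodule.span_induction with
  | mem _ hψ => exact hψ
  | zero => simpa using zero_mem_preimageCone hne
  | add ψ φ _ _ hψ hφ =>
    refine hF.left_mem_preimageCone_of_add_mem hne (posSemidef_vecMulVec_self_star _)
      (posSemidef_vecMulVec_self_star (ψ - φ)) ?_
    rw [vecMulVec_add_add_vecMulVec_sub, two_nsmul]
    have hadd := add_mem_preimageCone hF.1 hψ hφ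
    exact add_mem_preimageCone hF.1 hadd hadd
  | smul c ψ _ hψ =>
    rw [vecMulVec_smul_star_smul]
    exact smul_mem_preimageCone (Complex.normSq_nonneg c) hψ

lemma subset_of_forall_mem_faceSubspace (hF : IsFaceOf (JNR A) F) (hG : Convex ℝ G)
    (hne : G.Nonempty)
    (h : ∀ ψ ∈ faceSubspace A F, vecMulVec ψ (star ψ) ∈ preimageCone A G) : F ⊆ G := by
  intro x hx
  obtain ⟨ρ, hρ, rfl⟩ := hF.2.subset hx
  obtain ⟨m, v, hv⟩ := posSemidef_iff_eq_sum_vecMulVec.1 hρ.1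
  have hρF : ∑ i, vecMulVec (v i) (star (v i)) ∈ preimageCone A F :=
    hv ▸ hρ.mem_preimageCone_iff.2 hx
  have hvG (i : Fin m) : vecMulVec (v i) (star (v i)) ∈ preimageCone A G :=
    h _ <| Submodule.subset_span <| hF.mem_preimageCone_of_sum_mem ⟨_, hx⟩
      (fun j => posSemidef_vecMulVec_self_star (v j)) hρF i
  rw [← hρ.mem_preimageCone_iff, hv]
  exact Finset.sum_induction _ (· ∈ preimageCone A G) (fun _ _ => add_mem_preimageCone hG)
    (zero_mem_preimageCone hne) fun i _ => hvG i

lemma faceSubspace_le_iff (hF : IsFaceOf (JNR A) F) (hG : IsFaceOf (JNR A) G)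
    (hne : G.Nonempty) : faceSubspace A F ≤ faceSubspace A G ↔ F ⊆ G :=
  ⟨fun h => hF.subset_of_forall_mem_faceSubspace hG.1 hne fun _ hψ =>
    (hG.mem_faceSubspace hne).1 (h hψ), faceSubspace_mono⟩

lemma faceSubspace_lt_iff (hF : IsFaceOf (JNR A) F) (hG : IsFaceOf (JNR A) G)
    (hneF : F.Nonempty) (hneG : G.Nonempty) :
    faceSubspace A F < faceSubspace A G ↔ F ⊂ G := by
  rw [lt_iff_le_not_ge, hF.faceSubspace_le_iff hG hneG, hG.faceSubspace_le_iff hF hneF,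
    Set.ssubset_def]

lemma faceSubspace_inf_le (hF : IsFaceOf (JNR A) F) (hG : IsFaceOf (JNR A) G)
    (hne : (F ∩ G).Nonempty) :
    faceSubspace A F ⊓ faceSubspace A G ≤ faceSubspace A (F ∩ G) := fun _ hψ =>
  Submodule.subset_span <| preimageCone_inter_subset hne
    ⟨(hF.mem_faceSubspace hne.left).1 hψ.1, (hG.mem_faceSubspace hne.right).1 hψ.2⟩

lemma two_le_finrank_faceSubspace (hF : IsFaceOf (JNR A) F) (hF' : F.Nontrivial) :
    2 ≤ Module.finrank ℂ (faceSubspace A F) := by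
  by_contra! hlt
  obtain ⟨v, hv⟩ := finrank_le_one_iff.1 (Nat.le_of_lt_succ hlt)
  have hvF := (hF.mem_faceSubspace hF'.nonempty).1 v.2
  obtain ⟨x, -, hvx⟩ := hvF.2
  have hvx' : vecMulVec (v : n → ℂ) (star v) ∈ preimageCone A {x} :=
    ⟨hvF.1, x, rfl, hvx⟩
  refine Set.not_subsingleton_iff.2 hF' (Set.subsingleton_singleton.anti
    (hF.subset_of_forall_mem_faceSubspace (convex_singleton x) (Set.singleton_nonempty x) ?_))
  intro ψ hψ
  obtain ⟨c, hc⟩ := hv ⟨ψ, hψ⟩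
  obtain rfl : c • (v : n → ℂ) = ψ := congrArg Subtype.val hc
  rw [vecMulVec_smul_star_smul]
  exact smul_mem_preimageCone (Complex.normSq_nonneg c) hvx'

lemma subset_inter_of_inter_subset (hG : IsFaceOf (JNR A) G)
    (hF : IsFaceOf (JNR A) F) (hF' : IsFaceOf (JNR A) F') (hne : (F ∩ F').Nonempty)
    (hcut : F ∩ F' ⊆ G)
    (hdim : Module.finrank ℂ (faceSubspace A G) + Fintype.card n ≤
      Module.finrank ℂ (faceSubspace A F) + Module.finrank ℂ (faceSubspace A F')) :
    G ⊆ F ∩ F' := by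
  have hle : faceSubspace A F ⊓ faceSubspace A F' ≤ faceSubspace A G :=
    (hF.faceSubspace_inf_le hF' hne).trans (faceSubspace_mono hcut)
  have hsup : Module.finrank ℂ ↑(faceSubspace A F ⊔ faceSubspace A F') ≤ Fintype.card n :=
    (Submodule.finrank_le _).trans_eq (Module.finrank_fintype_fun_eq_card ℂ)
  have hadd := Submodule.finrank_sup_add_finrank_inf_eq (faceSubspace A F) (faceSubspace A F')
  have heq : faceSubspace A F ⊓ faceSubspace A F' = faceSubspace A G :=
    Submodule.eq_of_le_of_finrank_le hle (by omega)
  exact Set.subset_inter ((hG.faceSubspace_le_iff hF hne.left).1 (heq ▸ inf_le_left))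
    ((hG.faceSubspace_le_iff hF' hne.right).1 (heq ▸ inf_le_right))

end IsFaceOf

namespace IsNonexposedFlag

lemma finrank_faceSubspace (hn : Fintype.card n = 4) (hdim : convDim (JNR A) = 3)
    (h : IsNonexposedFlag (JNR A) G F) :
    Module.finrank ℂ (faceSubspace A G) = 2 ∧ Module.finrank ℂ (faceSubspace A F) = 3 := by
  have hF := IsFaceOf.of_isExposed convex_jnr h.isExposed
  have hG : G.Nontrivial := convDim_pos_iff.1 (h.convDim_edge.symm ▸ one_pos)
  have hGF : G ⊂ F := h.subset.ssubset_of_ne fun hGF => h.not_isExposed (hGF ▸ h.isExposed)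
  have hFW : F ⊂ JNR A := hF.2.subset.ssubset_of_ne fun hFW => by
    have := h.convDim_facet
    rw [hFW] at this
    omega
  have hneF := hG.nonempty.mono h.subset
  have h2 := h.isFaceOf.two_le_finrank_faceSubspace hG
  have hlt := Submodule.finrank_lt_finrank_of_lt
    ((h.isFaceOf.faceSubspace_lt_iff hF hG.nonempty hneF).2 hGF)
  have hlt' := Submodule.finrank_lt_finrank_of_lt
    ((hF.faceSubspace_lt_iff ⟨convex_jnr, IsExtreme.rfl⟩ hneF (hneF.mono hF.2.subset)).2 hFW)
  have hle := Submodule.finrank_le (faceSubspace A (JNR A))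
  rw [Module.finrank_fintype_fun_eq_card, hn] at hle
  omega

lemma not_inter_subset (hn : Fintype.card n = 4) (hdim : convDim (JNR A) = 3)
    (h : IsNonexposedFlag (JNR A) G F) (h' : IsNonexposedFlag (JNR A) G' F')
    (hne : (F ∩ F').Nonempty) : ¬ F ∩ F' ⊆ G := by
  intro hcut
  have hGFF' := h.isFaceOf.subset_inter_of_inter_subset
    (.of_isExposed convex_jnr h.isExposed) (.of_isExposed convex_jnr h'.isExposed) hne hcut (by
      rw [(h.finrank_faceSubspace hn hdim).1, (h.finrank_faceSubspace hn hdim).2,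
        (h'.finrank_faceSubspace hn hdim).2, hn])
  exact h.not_isExposed (hGFF'.antisymm hcut ▸ h.isExposed.inter h'.isExposed)

end IsNonexposedFlag

end JointNumericalRange

/-- the intersection of any three mutually distinct
one-dimensional nonexposed faces of `W` is empty. -/
theorem stmt9 (A : Fin 3 → Matrix (Fin 4) (Fin 4) ℂ)
    (hA : ∀ i, (A i).IsHermitian)
    (hdim : convDim (JNR A) = 3)
    (G₁ G₂ G₃ : Set (Fin 3 → ℝ))
    (hG₁ : IsFaceOf (JNR A) G₁) (hd₁ : convDim G₁ = 1)
    (hG₁ne : ¬ IsExposedFace (JNR A) G₁)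
    (hG₂ : IsFaceOf (JNR A) G₂) (hd₂ : convDim G₂ = 1)
    (hG₂ne : ¬ IsExposedFace (JNR A) G₂)
    (hG₃ : IsFaceOf (JNR A) G₃) (hd₃ : convDim G₃ = 1)
    (hG₃ne : ¬ IsExposedFace (JNR A) G₃)
    (h12 : G₁ ≠ G₂) (h13 : G₁ ≠ G₃) (h23 : G₂ ≠ G₃) :
    G₁ ∩ G₂ ∩ G₃ = ∅ := by
  rw [Set.eq_empty_iff_forall_notMem]
  rintro p ⟨⟨hp₁, hp₂⟩, hp₃⟩
  have hflag {G : Set (Fin 3 → ℝ)} (hG : IsFaceOf (JNR A) G) (hd : convDim G = 1)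
      (hGne : ¬ IsExposedFace (JNR A) G) (hp : p ∈ G) : ∃ F, IsNonexposedFlag (JNR A) G F :=
    hG.exists_isNonexposedFlag (Module.finrank_fin_fun ℝ) convex_jnr hdim hd fun hexp =>
      hGne (isExposedFace_of_isExposed hexp ⟨p, hp⟩)
  obtain ⟨F₁, hF₁⟩ := hflag hG₁ hd₁ hG₁ne hp₁
  obtain ⟨F₂, hF₂⟩ := hflag hG₂ hd₂ hG₂ne hp₂
  obtain ⟨F₃, hF₃⟩ := hflag hG₃ hd₃ hG₃ne hp₃
  have hF : ∀ i, IsNonexposedFlag (JNR A) (![G₁, G₂, G₃] i) (![F₁, F₂, F₃] i) := by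
    simp [Fin.forall_fin_succ, hF₁, hF₂, hF₃]
  have hp : ∀ i, p ∈ ![G₁, G₂, G₃] i := by simp [Fin.forall_fin_succ, hp₁, hp₂, hp₃]
  have hcut (i j : Fin 3) : ¬ ![F₁, F₂, F₃] i ∩ ![F₁, F₂, F₃] j ⊆ ![G₁, G₂, G₃] i :=
    (hF i).not_inter_subset (Fintype.card_fin 4) hdim (hF j)
      ⟨p, (hF i).subset (hp i), (hF j).subset (hp j)⟩
  exact IsNonexposedFlag.not_injective convex_jnr hdim.le hF hp hcut
    (List.nodup_ofFn.1 (by simp [h12, h13, h23]))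
end
end

section
/- Let A₁,...,A_k be hermitian n×n complex matrices such that W = W(A₁,...,A_k) is not a singleton, and let p be a corner point of W. Then there exist a natural number s with 1 ≤ s < n and hermitian s×s complex matrices B₁,...,B_k such that W = conv( {p} ∪ W(B₁,...,B_k) ). -/
/-! Let `p = w(ρ)` be a corner point, where `ρ` is a density matrix and
`w(σ) = (tr σA₁, …, tr σA_k)`. For `u` in the normal cone at `p`, the matrix `S(u) = ∑ uᵢ (Aᵢ - pᵢ)`
is positive semidefinite, because `tr σS(u) = ⟨w(σ) - p, u⟩ ≥ 0` for all density matrices `σ`. As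
`tr ρS(u) = 0`, this forces `ρ S(u) = 0`. This condition is linear in `u` and the normal cone spans,
so `ρ Aᵢ = pᵢ ρ` and, taking adjoints, `Aᵢ ρ = pᵢ ρ` for all `i`: each nonzero column of `ρ` is a
common eigenvector. Hence the `Aᵢ` are simultaneously unitarily equivalent to `pᵢ ⊕ Bᵢ`, and the
joint numerical range of a direct sum is the convex hull of the union of the joint numerical ranges
of the summands. -/

open Matrix ComplexOrder

noncomputable section

section JointNumericalRange

variable {m n : Type*} [Fintype m] [Fintype n] {k : ℕ}

theorem ofReal_re_trace_mul {M N : Matrix n n ℂ} (hM : M.IsHermitian) (hN : N.IsHermitian) :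
    (((M * N).trace.re : ℝ) : ℂ) = (M * N).trace := by
  rw [← Complex.conj_eq_iff_re, starRingEnd_apply, ← trace_conjTranspose, conjTranspose_mul, hM.eq,
    hN.eq, trace_mul_comm]

open scoped MatrixOrder in
theorem mul_eq_zero_of_trace_mul_eq_zero {𝕜 : Type*} [RCLike 𝕜] {M N : Matrix n n 𝕜}
    (hM : M.PosSemidef) (hN : N.PosSemidef) (h : (M * N).trace = 0) : M * N = 0 := by
  classical
  obtain ⟨C, rfl⟩ : ∃ C, M = Cᴴ * C := CStarAlgebra.nonneg_iff_eq_star_mul_self.1 hM.nonneg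
  obtain ⟨D, rfl⟩ : ∃ D, N = Dᴴ * D := CStarAlgebra.nonneg_iff_eq_star_mul_self.1 hN.nonneg
  have hCD : C * Dᴴ = 0 := by
    rw [← trace_mul_conjTranspose_self_eq_zero_iff, ← h, conjTranspose_mul,
      conjTranspose_conjTranspose, ← Matrix.mul_assoc, trace_mul_comm]
    simp only [Matrix.mul_assoc]
  calc Cᴴ * C * (Dᴴ * D) = Cᴴ * (C * Dᴴ) * D := by simp only [Matrix.mul_assoc]
    _ = 0 := by rw [hCD, Matrix.mul_zero, Matrix.zero_mul]

theorem eq_zero_or_exists_pos_smul_isDensity {M : Matrix n n ℂ} (hM : M.PosSemidef) :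
    M = 0 ∨ ∃ t : ℝ, 0 < t ∧ ∃ ρ, IsDensity ρ ∧ M = t • ρ := by
  refine or_iff_not_imp_left.2 fun hM0 => ?_
  have htr : 0 < M.trace := hM.trace_nonneg.lt_of_ne' (mt hM.trace_eq_zero_iff.1 hM0)
  obtain ⟨t, ht, htM⟩ := RCLike.pos_iff_exists_ofReal.1 htr
  refine ⟨t, ht, t⁻¹ • M, ⟨hM.smul (inv_pos.2 ht).le, ?_⟩, (smul_inv_smul₀ ht.ne' M).symm⟩
  rw [trace_smul, ← htM, RCLike.real_smul_eq_coe_mul, ← RCLike.ofReal_mul, inv_mul_cancel₀ ht.ne',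
    RCLike.ofReal_one]

theorem IsDensity.ne_zero {ρ : Matrix n n ℂ} (hρ : IsDensity ρ) : ρ ≠ 0 := by
  rintro rfl
  simpa using hρ.2

theorem exists_isDensity [Nonempty n] : ∃ ρ : Matrix n n ℂ, IsDensity ρ := by
  classical
  obtain h | ⟨_, _, ρ, hρ, _⟩ := eq_zero_or_exists_pos_smul_isDensity (PosSemidef.one (n := n))
  · exact absurd h one_ne_zero
  · exact ⟨ρ, hρ⟩

theorem convex_isDensity : Convex ℝ {ρ : Matrix n n ℂ | IsDensity ρ} := by
  rintro ρ hρ σ hσ a b ha hb hab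
  refine ⟨(hρ.1.smul ha).add (hσ.1.smul hb), ?_⟩
  rw [trace_add, trace_smul, trace_smul, hρ.2, hσ.2, ← add_smul, hab, one_smul]

theorem IsDensity.mul_mul_conjTranspose [DecidableEq m] {σ : Matrix m m ℂ} (hσ : IsDensity σ)
    {V : Matrix n m ℂ} (hV : Vᴴ * V = 1) : IsDensity (V * σ * Vᴴ) := by
  refine ⟨hσ.1.mul_mul_conjTranspose_same V, ?_⟩
  rw [trace_mul_cycle, hV, Matrix.one_mul, hσ.2]

theorem posSemidef_of_forall_isDensity {H : Matrix n n ℂ} (hH : H.IsHermitian)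
    (h : ∀ ρ, IsDensity ρ → 0 ≤ (ρ * H).trace.re) : H.PosSemidef := by
  refine .of_dotProduct_mulVec_nonneg hH fun x => ?_
  have hx : (vecMulVec x (star x)).PosSemidef := posSemidef_vecMulVec_self_star x
  have htr : (vecMulVec x (star x) * H).trace = star x ⬝ᵥ H *ᵥ x := by
    rw [trace_mul_comm, mul_vecMulVec, trace_vecMulVec, dotProduct_comm]
  rw [← htr, ← ofReal_re_trace_mul hx.1 hH, Complex.zero_le_real]
  obtain hx0 | ⟨t, ht, ρ, hρ, hxρ⟩ := eq_zero_or_exists_pos_smul_isDensity hx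
  · simp [hx0]
  · rw [hxρ, Matrix.smul_mul, trace_smul, Complex.smul_re]
    exact mul_nonneg ht.le (h ρ hρ)

theorem isLinearMap_wpt (A : Fin k → Matrix n n ℂ) : IsLinearMap ℝ (wpt A) where
  map_add ρ σ := by ext i; simp [wpt, Matrix.add_mul]
  map_smul t ρ := by ext i; simp [wpt]

theorem convex_jnr_s12 (A : Fin k → Matrix n n ℂ) : Convex ℝ (JNR A) :=
  convex_isDensity.is_linear_image (isLinearMap_wpt A)

theorem jnr_eq_empty [IsEmpty n] (A : Fin k → Matrix n n ℂ) : JNR A = ∅ := by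
  rw [JNR, Set.image_eq_empty]
  exact Set.eq_empty_of_forall_notMem fun ρ hρ => hρ.ne_zero (Subsingleton.elim ρ 0)

theorem jnr_smul_one [DecidableEq n] [Nonempty n] (p : Fin k → ℝ) :
    JNR (fun i => p i • (1 : Matrix n n ℂ)) = {p} := by
  have hwpt : ∀ ρ : Matrix n n ℂ, IsDensity ρ → wpt (fun i => p i • 1) ρ = p := by
    intro ρ hρ
    ext i
    simp [wpt, hρ.2]
  obtain ⟨ρ, hρ⟩ := exists_isDensity (n := n)
  exact Set.eq_singleton_iff_unique_mem.2
    ⟨⟨ρ, hρ, hwpt ρ hρ⟩, Set.forall_mem_image.2 hwpt⟩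

theorem wpt_conjTranspose_mul_mul (A : Fin k → Matrix n n ℂ) (V : Matrix n m ℂ)
    (σ : Matrix m m ℂ) : wpt (fun i => Vᴴ * A i * V) σ = wpt A (V * σ * Vᴴ) := by
  ext i
  rw [wpt, wpt, ← Matrix.mul_assoc, trace_mul_comm]
  simp only [Matrix.mul_assoc]

theorem jnr_conjTranspose_mul_mul_subset [DecidableEq m] (A : Fin k → Matrix n n ℂ)
    {V : Matrix n m ℂ} (hV : Vᴴ * V = 1) : JNR (fun i => Vᴴ * A i * V) ⊆ JNR A := by
  rintro _ ⟨σ, hσ, rfl⟩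
  exact ⟨V * σ * Vᴴ, hσ.mul_mul_conjTranspose hV, (wpt_conjTranspose_mul_mul A V σ).symm⟩

theorem jnr_conjTranspose_mul_mul [DecidableEq m] [DecidableEq n] (A : Fin k → Matrix n n ℂ)
    {U : Matrix n m ℂ} (hU : Uᴴ * U = 1) (hU' : U * Uᴴ = 1) :
    JNR (fun i => Uᴴ * A i * U) = JNR A := by
  refine (jnr_conjTranspose_mul_mul_subset A hU).antisymm ?_
  have hA : A = fun i => Uᴴᴴ * (Uᴴ * A i * U) * Uᴴ := by
    funext i
    calc A i = (U * Uᴴ) * A i * (U * Uᴴ) := by rw [hU', Matrix.one_mul, Matrix.mul_one]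
      _ = Uᴴᴴ * (Uᴴ * A i * U) * Uᴴ := by
        simp only [conjTranspose_conjTranspose, Matrix.mul_assoc]
  conv_lhs => rw [hA]
  exact jnr_conjTranspose_mul_mul_subset _ (by rwa [conjTranspose_conjTranspose])

theorem trace_eq_trace_toBlocks_add {R : Type*} [AddCommMonoid R] (M : Matrix (m ⊕ n) (m ⊕ n) R) :
    M.trace = M.toBlocks₁₁.trace + M.toBlocks₂₂.trace :=
  Fintype.sum_sum_type _

theorem wpt_fromBlocks (A : Fin k → Matrix m m ℂ) (B : Fin k → Matrix n n ℂ)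
    (ρ : Matrix (m ⊕ n) (m ⊕ n) ℂ) :
    wpt (fun i => fromBlocks (A i) 0 0 (B i)) ρ = wpt A ρ.toBlocks₁₁ + wpt B ρ.toBlocks₂₂ := by
  ext i
  simp only [wpt, Pi.add_apply]
  conv_lhs => rw [← fromBlocks_toBlocks ρ, fromBlocks_multiply, trace_eq_trace_toBlocks_add]
  simp

theorem wpt_fromBlocks_mem_convexHull (A : Fin k → Matrix m m ℂ) (B : Fin k → Matrix n n ℂ)
    {ρ : Matrix (m ⊕ n) (m ⊕ n) ℂ} (hρ : IsDensity ρ) :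
    wpt (fun i => fromBlocks (A i) 0 0 (B i)) ρ ∈ convexHull ℝ (JNR A ∪ JNR B) := by
  have hρ₁ : ρ.toBlocks₁₁.PosSemidef := hρ.1.submatrix Sum.inl
  have hρ₂ : ρ.toBlocks₂₂.PosSemidef := hρ.1.submatrix Sum.inr
  have htr : ρ.toBlocks₁₁.trace + ρ.toBlocks₂₂.trace = 1 := by
    rw [← trace_eq_trace_toBlocks_add, hρ.2]
  rw [wpt_fromBlocks]
  obtain h₁ | ⟨a, ha, σ, hσ, h₁⟩ := eq_zero_or_exists_pos_smul_isDensity hρ₁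
  · rw [h₁, trace_zero, zero_add] at htr
    rw [h₁, (isLinearMap_wpt A).map_zero, zero_add]
    exact subset_convexHull ℝ _ (.inr ⟨_, ⟨hρ₂, htr⟩, rfl⟩)
  obtain h₂ | ⟨b, hb, τ, hτ, h₂⟩ := eq_zero_or_exists_pos_smul_isDensity hρ₂
  · rw [h₂, trace_zero, add_zero] at htr
    rw [h₂, (isLinearMap_wpt B).map_zero, add_zero]
    exact subset_convexHull ℝ _ (.inl ⟨_, ⟨hρ₁, htr⟩, rfl⟩)
  have hab : a + b = 1 := by
    rw [h₁, h₂, trace_smul, trace_smul, hσ.2, hτ.2, ← add_smul] at htr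
    exact Complex.ofReal_injective (by simpa using htr)
  rw [h₁, h₂, (isLinearMap_wpt A).map_smul, (isLinearMap_wpt B).map_smul]
  exact convex_convexHull ℝ _ (subset_convexHull ℝ _ (.inl ⟨σ, hσ, rfl⟩))
    (subset_convexHull ℝ _ (.inr ⟨τ, hτ, rfl⟩)) ha.le hb.le hab

theorem jnr_subset_jnr_fromBlocks_left (A : Fin k → Matrix m m ℂ) (B : Fin k → Matrix n n ℂ) :
    JNR A ⊆ JNR (fun i => fromBlocks (A i) 0 0 (B i)) := by
  classical
  let V : Matrix (m ⊕ n) m ℂ := fromRows 1 0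
  have hV : Vᴴ * V = 1 := by
    simp [V, conjTranspose_fromRows_eq_fromCols_conjTranspose, fromCols_mul_fromRows]
  simpa [V, conjTranspose_fromRows_eq_fromCols_conjTranspose, fromBlocks_mul_fromRows,
    fromCols_mul_fromRows, Matrix.mul_assoc] using
    jnr_conjTranspose_mul_mul_subset (fun i => fromBlocks (A i) 0 0 (B i)) hV

theorem jnr_subset_jnr_fromBlocks_right (A : Fin k → Matrix m m ℂ) (B : Fin k → Matrix n n ℂ) :
    JNR B ⊆ JNR (fun i => fromBlocks (A i) 0 0 (B i)) := by
  classical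
  let V : Matrix (m ⊕ n) n ℂ := fromRows 0 1
  have hV : Vᴴ * V = 1 := by
    simp [V, conjTranspose_fromRows_eq_fromCols_conjTranspose, fromCols_mul_fromRows]
  simpa [V, conjTranspose_fromRows_eq_fromCols_conjTranspose, fromBlocks_mul_fromRows,
    fromCols_mul_fromRows, Matrix.mul_assoc] using
    jnr_conjTranspose_mul_mul_subset (fun i => fromBlocks (A i) 0 0 (B i)) hV

theorem jnr_fromBlocks (A : Fin k → Matrix m m ℂ) (B : Fin k → Matrix n n ℂ) :
    JNR (fun i => fromBlocks (A i) 0 0 (B i)) = convexHull ℝ (JNR A ∪ JNR B) := by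
  refine Set.Subset.antisymm ?_ (convexHull_min (Set.union_subset ?_ ?_) (convex_jnr_s12 _))
  · rintro _ ⟨ρ, hρ, rfl⟩
    exact wpt_fromBlocks_mem_convexHull A B hρ
  · exact jnr_subset_jnr_fromBlocks_left A B
  · exact jnr_subset_jnr_fromBlocks_right A B

/-- The pencil `u ↦ ∑ i, u i • (A i - p i)` of the matrices `A` translated by `p`, as a real linear
map. Its values are the observables whose expectations are the linear functionals
`⟨· - p, u⟩` on the joint numerical range. -/
def translatedPencil {n : Type*} [DecidableEq n] (A : Fin k → Matrix n n ℂ) (p : Fin k → ℝ) :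
    (Fin k → ℝ) →ₗ[ℝ] Matrix n n ℂ :=
  Fintype.linearCombination ℝ fun i => A i - p i • 1

theorem isHermitian_translatedPencil {n : Type*} [DecidableEq n] {A : Fin k → Matrix n n ℂ}
    (hA : ∀ i, (A i).IsHermitian) (p u : Fin k → ℝ) : (translatedPencil A p u).IsHermitian := by
  simp [translatedPencil, Fintype.linearCombination_apply, IsHermitian, conjTranspose_sum,
    (hA _).eq]

theorem re_trace_mul_translatedPencil [DecidableEq n] (A : Fin k → Matrix n n ℂ)
    (p u : Fin k → ℝ) {ρ : Matrix n n ℂ} (hρ : ρ.trace = 1) :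
    (ρ * translatedPencil A p u).trace.re = dotR (wpt A ρ - p) u := by
  simp [translatedPencil, Fintype.linearCombination_apply, Finset.mul_sum, trace_sum, dotR, wpt,
    Matrix.mul_sub, hρ, mul_comm]

theorem mul_translatedPencil_eq_zero_of_mem_normalConeAt [DecidableEq n]
    {A : Fin k → Matrix n n ℂ} (hA : ∀ i, (A i).IsHermitian) {ρ : Matrix n n ℂ}
    (hρ : IsDensity ρ) {u : Fin k → ℝ} (hu : u ∈ normalConeAt (JNR A) (wpt A ρ)) :
    ρ * translatedPencil A (wpt A ρ) u = 0 := by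
  have hS := isHermitian_translatedPencil hA (wpt A ρ) u
  have hpos : (translatedPencil A (wpt A ρ) u).PosSemidef := by
    refine posSemidef_of_forall_isDensity hS fun σ hσ => ?_
    rw [re_trace_mul_translatedPencil A _ u hσ.2]
    exact hu _ ⟨σ, hσ, rfl⟩
  refine mul_eq_zero_of_trace_mul_eq_zero hρ.1 hpos ?_
  rw [← ofReal_re_trace_mul hρ.1.1 hS, re_trace_mul_translatedPencil A _ u hρ.2, sub_self]
  simp [dotR]

theorem mul_eq_smul_of_isCornerPoint {A : Fin k → Matrix n n ℂ} (hA : ∀ i, (A i).IsHermitian)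
    {ρ : Matrix n n ℂ} (hρ : IsDensity ρ) (hp : IsCornerPoint (JNR A) (wpt A ρ)) (i : Fin k) :
    A i * ρ = wpt A ρ i • ρ := by
  classical
  have hker : ⊤ ≤ (LinearMap.mulLeft ℝ ρ ∘ₗ translatedPencil A (wpt A ρ)).ker := by
    rw [← hp.2, Submodule.span_le]
    exact fun u hu => mul_translatedPencil_eq_zero_of_mem_normalConeAt hA hρ hu
  have hzero : ρ * (A i - wpt A ρ i • 1) = 0 := by
    simpa [translatedPencil] using hker (Submodule.mem_top (x := Pi.single i 1))
  have hmul : ρ * A i = wpt A ρ i • ρ := by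
    simpa [Matrix.mul_sub, sub_eq_zero] using hzero
  simpa [conjTranspose_mul, hρ.1.1.eq, (hA i).eq] using congrArg conjTranspose hmul

theorem exists_common_eigenvector_of_isCornerPoint {A : Fin k → Matrix n n ℂ}
    (hA : ∀ i, (A i).IsHermitian) {p : Fin k → ℝ} (hp : IsCornerPoint (JNR A) p) :
    ∃ v : n → ℂ, v ≠ 0 ∧ ∀ i, A i *ᵥ v = p i • v := by
  obtain ⟨ρ, hρ, rfl⟩ := hp.1
  obtain ⟨j, hj⟩ : ∃ j, ρ.col j ≠ 0 := by
    by_contra! h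
    exact hρ.ne_zero (Matrix.ext_col h)
  refine ⟨ρ.col j, hj, fun i => ?_⟩
  exact congrArg (Matrix.col · j) (mul_eq_smul_of_isCornerPoint hA hρ hp i)

theorem exists_unitary_col_eq_smul {𝕜 : Type*} [RCLike 𝕜] [DecidableEq n] {s : ℕ}
    (hs : s + 1 = Fintype.card n) {v : n → 𝕜} (hv : v ≠ 0) :
    ∃ U : Matrix n (Unit ⊕ Fin s) 𝕜, Uᴴ * U = 1 ∧ U * Uᴴ = 1 ∧
      ∃ c : 𝕜, U.col (.inl ()) = c • v := by
  let w : EuclideanSpace 𝕜 n := WithLp.toLp 2 v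
  have hw : w ≠ 0 := by simpa [w] using hv
  have hw1 : Orthonormal 𝕜
      (({.inl ()} : Set (Unit ⊕ Fin s)).domRestrict fun _ => (‖w‖⁻¹ : 𝕜) • w) := by
    rw [orthonormal_subsingleton_iff]
    exact fun _ => norm_smul_inv_norm hw
  obtain ⟨b, hb⟩ := hw1.exists_orthonormalBasis_extension_of_card_eq (by simp [← hs, add_comm])
  let e := EuclideanSpace.basisFun n 𝕜
  refine ⟨e.toBasis.toMatrix b, e.toMatrix_orthonormalBasis_conjTranspose_mul_self b,
    e.toMatrix_orthonormalBasis_self_mul_conjTranspose b, (‖w‖⁻¹ : 𝕜), ?_⟩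
  ext i
  simp [e, w, Module.Basis.toMatrix_apply, hb]

theorem conjTranspose_mul_mul_eq_fromBlocks {𝕜 κ l : Type*} [RCLike 𝕜] [DecidableEq κ]
    [DecidableEq l] {H : Matrix n n 𝕜} (hH : H.IsHermitian) {U : Matrix n (κ ⊕ l) 𝕜}
    (hU : Uᴴ * U = 1) {μ : ℝ} (hμ : ∀ j, H *ᵥ U.col (.inl j) = μ • U.col (.inl j)) :
    Uᴴ * H * U = fromBlocks (μ • 1) 0 0 (Uᴴ * H * U).toBlocks₂₂ := by
  have hcol : ∀ a j, (Uᴴ * H * U) a (.inl j) = μ • (1 : Matrix (κ ⊕ l) (κ ⊕ l) 𝕜) a (.inl j) := by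
    intro a j
    calc (Uᴴ * H * U) a (.inl j) = (Uᴴ *ᵥ (H *ᵥ U.col (.inl j))) a := by
          rw [Matrix.mulVec_mulVec]; rfl
      _ = μ • (Uᴴ * U) a (.inl j) := by rw [hμ, mulVec_smul]; rfl
      _ = _ := by rw [hU]
  have h₁₁ : (Uᴴ * H * U).toBlocks₁₁ = μ • 1 := by
    ext a j
    simp [toBlocks₁₁, hcol, Matrix.one_apply]
  have h₂₁ : (Uᴴ * H * U).toBlocks₂₁ = 0 := by
    ext a j
    simp [toBlocks₂₁, hcol]
  have h₁₂ : (Uᴴ * H * U).toBlocks₁₂ = 0 := by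
    have hherm := isHermitian_conjTranspose_mul_mul U hH
    rw [← fromBlocks_toBlocks (Uᴴ * H * U), isHermitian_fromBlocks_iff] at hherm
    rw [← hherm.2.2.1, h₂₁, conjTranspose_zero]
  conv_lhs => rw [← fromBlocks_toBlocks (Uᴴ * H * U), h₁₁, h₁₂, h₂₁]

theorem stmt12_general (A : Fin k → Matrix n n ℂ) (hA : ∀ i, (A i).IsHermitian) (p : Fin k → ℝ)
    (hp : IsCornerPoint (JNR A) p) :
    ∃ s : ℕ, s + 1 = Fintype.card n ∧
      ∃ B : Fin k → Matrix (Fin s) (Fin s) ℂ, (∀ i, (B i).IsHermitian) ∧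
        JNR A = convexHull ℝ ({p} ∪ JNR B) := by
  classical
  obtain ⟨v, hv, hAv⟩ := exists_common_eigenvector_of_isCornerPoint hA hp
  obtain ⟨j, -⟩ := Function.ne_iff.1 hv
  obtain ⟨s, hs⟩ := Nat.exists_eq_add_one.2 (Fintype.card_pos_iff.2 ⟨j⟩)
  obtain ⟨U, hU, hU', c, hc⟩ := exists_unitary_col_eq_smul hs.symm hv
  let B : Fin k → Matrix (Fin s) (Fin s) ℂ := fun i => (Uᴴ * A i * U).toBlocks₂₂
  have hblock : ∀ i, Uᴴ * A i * U = fromBlocks (p i • 1) 0 0 (B i) := fun i =>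
    conjTranspose_mul_mul_eq_fromBlocks (hA i) hU fun _ => by
      rw [hc, mulVec_smul, hAv, smul_comm]
  refine ⟨s, hs.symm, B, fun i => (isHermitian_conjTranspose_mul_mul U (hA i)).submatrix _, ?_⟩
  calc JNR A = JNR fun i => fromBlocks (p i • (1 : Matrix Unit Unit ℂ)) 0 0 (B i) := by
        rw [← jnr_conjTranspose_mul_mul A hU hU', funext hblock]
    _ = convexHull ℝ ({p} ∪ JNR B) := by rw [jnr_fromBlocks, jnr_smul_one]

end JointNumericalRange

/-- if `W` is not a singleton and `p` is a corner point of `W`,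
then `W` is the convex hull of `p` and the joint numerical range of `k`
hermitian matrices of some size `s < n`. -/
theorem stmt12 {n k : ℕ} (A : Fin k → Matrix (Fin n) (Fin n) ℂ)
    (hA : ∀ i, (A i).IsHermitian)
    (hns : ¬ ∃ x, JNR A = {x})
    (p : Fin k → ℝ) (hp : IsCornerPoint (JNR A) p) :
    ∃ s : ℕ, 1 ≤ s ∧ s < n ∧
      ∃ B : Fin k → Matrix (Fin s) (Fin s) ℂ, (∀ i, (B i).IsHermitian) ∧
        JNR A = convexHull ℝ ({p} ∪ JNR B) := by
  obtain ⟨s, hs, B, hB, hW⟩ := stmt12_general A hA p hp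
  rw [Fintype.card_fin] at hs
  refine ⟨s, Nat.one_le_iff_ne_zero.2 ?_, by omega, B, hB, hW⟩
  rintro rfl
  exact hns ⟨p, by rw [hW, jnr_eq_empty, Set.union_empty, convexHull_singleton]⟩
end
end

section
/- Let Y₁ and Y₂ be convex subsets of a real vector space and let F be a face of the convex hull conv(Y₁ ∪ Y₂). Then F ∩ Y₁ is a face of Y₁, F ∩ Y₂ is a face of Y₂, and F = conv( (F ∩ Y₁) ∪ (F ∩ Y₂) ). -/
open Matrix ComplexOrder

noncomputable section

section

variable {𝕜 E : Type*} [Semiring 𝕜] [PartialOrder 𝕜] [AddCommMonoid E]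

theorem isExtreme_inter_of_subset [SMul 𝕜 E] {A B C : Set E} (hAB : IsExtreme 𝕜 A B)
    (hCA : C ⊆ A) : IsExtreme 𝕜 C (B ∩ C) :=
  ⟨Set.inter_subset_right, fun _ hx _ hy _ hz hzxy =>
    ⟨hAB.left_mem_of_mem_openSegment (hCA hx) (hCA hy) hz.1 hzxy, hx⟩⟩

variable [ZeroLEOneClass 𝕜] [Module 𝕜 E] {B S : Set E}

theorem subset_convexHull_inter_of_isExtreme (hB : IsExtreme 𝕜 (convexHull 𝕜 S) B) :
    B ⊆ convexHull 𝕜 (B ∩ S) := by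
  -- Extremality makes `D` convex: a segment of `convexHull 𝕜 S` whose interior meets `B` has
  -- both endpoints in `B`, hence in `convexHull 𝕜 (B ∩ S)`.
  let D : Set E := {x ∈ convexHull 𝕜 S | x ∈ B → x ∈ convexHull 𝕜 (B ∩ S)}
  have subset_D : S ⊆ D := fun x hx =>
    ⟨subset_convexHull 𝕜 S hx, fun hxB => subset_convexHull 𝕜 _ ⟨hxB, hx⟩⟩
  have convex_D : Convex 𝕜 D := by
    rw [convex_iff_openSegment_subset]
    rintro x ⟨hxS, hx⟩ y ⟨hyS, hy⟩ z hz
    refine ⟨(convex_convexHull 𝕜 S).openSegment_subset hxS hyS hz, fun hzB => ?_⟩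
    have hxB : x ∈ B := hB.left_mem_of_mem_openSegment hxS hyS hzB hz
    have hyB : y ∈ B := hB.right_mem_of_mem_openSegment hxS hyS hzB hz
    exact (convex_convexHull 𝕜 _).openSegment_subset (hx hxB) (hy hyB) hz
  exact fun x hx => (convexHull_min subset_D convex_D (hB.subset hx)).2 hx

end

namespace IsFaceOf

variable {E : Type*} [AddCommGroup E] [Module ℝ E] {C F S Y : Set E}

theorem inter_of_subset (hF : IsFaceOf C F) (hY : Convex ℝ Y) (hYC : Y ⊆ C) :
    IsFaceOf Y (F ∩ Y) :=
  ⟨hF.1.inter hY, isExtreme_inter_of_subset hF.2 hYC⟩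

theorem eq_convexHull_inter (hF : IsFaceOf (convexHull ℝ S) F) : F = convexHull ℝ (F ∩ S) :=
  (subset_convexHull_inter_of_isExtreme hF.2).antisymm (convexHull_min Set.inter_subset_left hF.1)

end IsFaceOf

/-- faces of the convex hull of a union of two convex sets. -/
theorem stmt13 {E : Type*} [AddCommGroup E] [Module ℝ E]
    (Y₁ Y₂ : Set E) (hY₁ : Convex ℝ Y₁) (hY₂ : Convex ℝ Y₂)
    (F : Set E) (hF : IsFaceOf (convexHull ℝ (Y₁ ∪ Y₂)) F) :
    IsFaceOf Y₁ (F ∩ Y₁) ∧ IsFaceOf Y₂ (F ∩ Y₂) ∧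
      F = convexHull ℝ ((F ∩ Y₁) ∪ (F ∩ Y₂)) := by
  have hull : Y₁ ∪ Y₂ ⊆ convexHull ℝ (Y₁ ∪ Y₂) := subset_convexHull ℝ _
  refine ⟨hF.inter_of_subset hY₁ (Set.subset_union_left.trans hull),
    hF.inter_of_subset hY₂ (Set.subset_union_right.trans hull), ?_⟩
  rw [← Set.inter_union_distrib_left]
  exact hF.eq_convexHull_inter
end
end

section
/- Let A₁ and A₂ be hermitian n×n complex matrices. Then W(A₁,A₂) = { (⟨φ, A₁φ⟩, ⟨φ, A₂φ⟩) : φ ∈ ℂⁿ, ‖φ‖ = 1 }; that is, the joint numerical range of two hermitian matrices, defined via density matrices, coincides with the set of pairs of expectation values at unit vectors. -/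
open Matrix ComplexOrder

noncomputable section

/-!
A pair of hermitian matrices is encoded by `M = A₀ + i A₁`: the real and imaginary parts of
`tr (ρ M)` are `tr (ρ A₀)` and `tr (ρ A₁)`. Diagonalizing a density matrix `ρ` exhibits `tr (ρ M)`
as a convex combination of values `⟪φ, M φ⟫` at unit vectors, so the claim reduces to the
Toeplitz–Hausdorff theorem: the numerical range of an operator `T` is convex.

For the latter, let `w` be a convex combination of the values of `T` at `φ` and `ψ`, and put
`B x y = ⟪x, (T - w) y⟫`. Then `B φ φ` is a negative multiple of `d = B ψ ψ`. If `d ≠ 0`, then for a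
suitable phase `z` the cross terms of `B` at `φ + r z ψ`, with `r` real, are a real multiple of `d`,
so `B (φ + r z ψ) (φ + r z ψ) / d` is a real quadratic polynomial in `r`. Its constant and leading
coefficients have opposite signs, hence it has a real root, and normalizing `φ + r z ψ` there gives
a unit vector at which `T` takes the value `w`.
-/

section ToeplitzHausdorff

open scoped ComplexConjugate InnerProductSpace

theorem exists_norm_eq_one_mul_add_conj_mul_eq_ofReal (u v : ℂ) :
    ∃ (z : ℂ) (c : ℝ), ‖z‖ = 1 ∧ z * u + conj z * v = c := by
  obtain ⟨z, hz, hzw⟩ := Complex.exists_norm_eq_mul_self (u - conj v)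
  refine ⟨z, ‖u - conj v‖ + 2 * (conj z * v).re, hz, ?_⟩
  have hre : ((2 * (conj z * v).re : ℝ) : ℂ) = conj z * v + z * conj v := by
    rw [← Complex.add_conj, map_mul, Complex.conj_conj]
  push_cast at hre ⊢
  linear_combination -hzw - hre

theorem exists_real_quadratic_eq_zero_of_pos_of_nonpos {a c : ℝ} (ha : 0 < a) (hc : c ≤ 0)
    (b : ℝ) : ∃ r : ℝ, a * (r * r) + b * r + c = 0 := by
  have hdiscrim : 0 ≤ discrim a b c := by
    rw [discrim]
    nlinarith [sq_nonneg b, mul_nonneg ha.le (neg_nonneg.2 hc)]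
  exact exists_quadratic_eq_zero ha.ne' ⟨_, (Real.mul_self_sqrt hdiscrim).symm⟩

theorem apply_add_smul_self {R E : Type*} [CommSemiring R] [StarRing R] [AddCommMonoid E]
    [Module R E] (B : E →ₗ⋆[R] E →ₗ[R] R) (φ ψ : E) (c : R) :
    B (φ + c • ψ) (φ + c • ψ) =
      B φ φ + (c * B φ ψ + conj c * B ψ φ) + conj c * c * B ψ ψ := by
  simp only [map_add, map_smulₛₗ, LinearMap.add_apply, LinearMap.smul_apply, smul_eq_mul,
    RingHom.id_apply]
  ring

theorem exists_ne_zero_apply_self_eq_zero {E : Type*} [AddCommGroup E] [Module ℂ E]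
    (B : E →ₗ⋆[ℂ] E →ₗ[ℂ] ℂ) {φ ψ : E} (hφ : φ ≠ 0) {a b : ℝ} (ha : 0 < a) (hb : 0 < b)
    (hB : a * B φ φ + b * B ψ ψ = 0) : ∃ χ ≠ 0, B χ χ = 0 := by
  have haC : (a : ℂ) ≠ 0 := by exact_mod_cast ha.ne'
  by_cases hBψ : B ψ ψ = 0
  · exact ⟨φ, hφ, by simpa [hBψ, haC] using hB⟩
  obtain ⟨z, c, hz, hc⟩ :=
    exists_norm_eq_one_mul_add_conj_mul_eq_ofReal (B φ ψ / B ψ ψ) (B ψ φ / B ψ ψ)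
  have hcross : z * B φ ψ + conj z * B ψ φ = c * B ψ ψ := by
    rw [← hc]
    field_simp
  obtain ⟨r, hr⟩ := exists_real_quadratic_eq_zero_of_pos_of_nonpos ha (neg_nonpos.2 hb.le) (a * c)
  have hrC : (a : ℂ) * (r * r) + a * c * r + -b = 0 := by exact_mod_cast hr
  have hzz : conj z * z = 1 := by rw [Complex.conj_mul', hz]; norm_num
  refine ⟨φ + ((r : ℂ) * z) • ψ, fun hχ => ?_, ?_⟩
  · have hφψ : φ = (-(r * z)) • ψ := by
      rw [neg_smul]
      exact eq_neg_of_add_eq_zero_left hχ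
    have hzero : ((a * r ^ 2 + b : ℝ) : ℂ) * B ψ ψ = 0 := by
      rw [hφψ] at hB
      simp only [map_smulₛₗ, LinearMap.smul_apply, smul_eq_mul, map_neg, map_mul,
        Complex.conj_ofReal, RingHom.id_apply] at hB
      push_cast
      linear_combination hB - a * r ^ 2 * B ψ ψ * hzz
    have hpos : 0 < a * r ^ 2 + b := by positivity
    exact (mul_ne_zero (by exact_mod_cast hpos.ne') hBψ) hzero
  · rw [apply_add_smul_self, map_mul, Complex.conj_ofReal]
    refine (mul_right_inj' haC).1 ?_
    linear_combination hB + B ψ ψ * hrC + a * r * hcross + a * r ^ 2 * B ψ ψ * hzz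

/-- The numerical range of a linear operator `T` on a complex inner product space: the set of
values `⟪φ, T φ⟫` at unit vectors `φ`. -/
def numericalRange {E : Type*} [NormedAddCommGroup E] [InnerProductSpace ℂ E] (T : E →ₗ[ℂ] E) :
    Set ℂ :=
  (fun φ => ⟪φ, T φ⟫_ℂ) '' Metric.sphere 0 1

variable {E : Type*} [NormedAddCommGroup E] [InnerProductSpace ℂ E]

theorem mem_numericalRange_of_inner_eq {T : E →ₗ[ℂ] E} {w : ℂ} {χ : E} (hχ : χ ≠ 0)
    (h : ⟪χ, T χ⟫_ℂ = w * ⟪χ, χ⟫_ℂ) : w ∈ numericalRange T := by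
  have hunit : ‖(‖χ‖⁻¹ : ℂ) • χ‖ = 1 := norm_smul_inv_norm hχ
  refine ⟨(‖χ‖⁻¹ : ℂ) • χ, mem_sphere_zero_iff_norm.2 hunit, ?_⟩
  have hself : ⟪(‖χ‖⁻¹ : ℂ) • χ, (‖χ‖⁻¹ : ℂ) • χ⟫_ℂ = 1 := inner_self_eq_one_of_norm_eq_one hunit
  simp only [map_smul, inner_smul_left, inner_smul_right] at hself ⊢
  linear_combination (‖χ‖⁻¹ * conj (‖χ‖⁻¹ : ℂ)) * h + w * hself

theorem convex_numericalRange (T : E →ₗ[ℂ] E) : Convex ℝ (numericalRange T) := by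
  rw [convex_iff_forall_pos]
  rintro _ ⟨φ, hφ, rfl⟩ _ ⟨ψ, hψ, rfl⟩ a b ha hb hab
  rw [mem_sphere_zero_iff_norm] at hφ hψ
  set w : ℂ := a • ⟪φ, T φ⟫_ℂ + b • ⟪ψ, T ψ⟫_ℂ with hw
  have habC : (a : ℂ) + b = 1 := by exact_mod_cast hab
  let B : E →ₗ⋆[ℂ] E →ₗ[ℂ] ℂ := (innerₛₗ ℂ).compl₂ (T - w • LinearMap.id)
  have hB (χ : E) : B χ χ = ⟪χ, T χ⟫_ℂ - w * ⟪χ, χ⟫_ℂ := by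
    simp [B, inner_sub_right, inner_smul_right]
  have hcomb : a * B φ φ + b * B ψ ψ = 0 := by
    rw [hB, hB, inner_self_eq_one_of_norm_eq_one hφ, inner_self_eq_one_of_norm_eq_one hψ]
    simp only [Complex.real_smul] at hw
    linear_combination -hw - w * habC
  obtain ⟨χ, hχ, hχB⟩ :=
    exists_ne_zero_apply_self_eq_zero B (norm_ne_zero_iff.1 (hφ ▸ one_ne_zero)) ha hb hcomb
  exact mem_numericalRange_of_inner_eq hχ (sub_eq_zero.1 (hB χ ▸ hχB))

end ToeplitzHausdorff

section DensityMatrix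

open scoped InnerProductSpace

variable {n : Type*} [Fintype n]

theorem im_trace_mul_eq_zero_of_isHermitian {𝕜 : Type*} [RCLike 𝕜] {A B : Matrix n n 𝕜}
    (hA : A.IsHermitian) (hB : B.IsHermitian) : RCLike.im (A * B).trace = 0 := by
  rw [← RCLike.conj_eq_iff_im, starRingEnd_apply, ← trace_conjTranspose, conjTranspose_mul, hA.eq,
    hB.eq, trace_mul_comm]

theorem trace_mul_eq_sum_eigenvalues_mul_inner [DecidableEq n] {𝕜 : Type*} [RCLike 𝕜]
    {ρ : Matrix n n 𝕜} (hρ : ρ.IsHermitian) (M : Matrix n n 𝕜) :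
    (ρ * M).trace = ∑ i, (hρ.eigenvalues i : 𝕜) *
      ⟪hρ.eigenvectorBasis i, toEuclideanLin M (hρ.eigenvectorBasis i)⟫_𝕜 := by
  have htrace : (M * ρ).trace = (toEuclideanLin (M * ρ)).trace 𝕜 _ :=
    (trace_toLin_eq (M * ρ) (PiLp.basisFun 2 𝕜 n)).symm
  rw [trace_mul_comm, htrace, LinearMap.trace_eq_sum_inner _ hρ.eigenvectorBasis]
  refine Finset.sum_congr rfl fun i _ => ?_
  have heigen : toEuclideanLin ρ (hρ.eigenvectorBasis i) =
      (hρ.eigenvalues i : 𝕜) • hρ.eigenvectorBasis i := by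
    rw [toLpLin_apply, hρ.mulVec_eigenvectorBasis, RCLike.real_smul_eq_coe_smul (K := 𝕜),
      WithLp.toLp_smul, WithLp.toLp_ofLp]
  rw [toLpLin_mul_same, LinearMap.comp_apply, heigen, map_smul, inner_smul_right]

theorem mem_numericalRange_toEuclideanLin_iff [DecidableEq n] {M : Matrix n n ℂ} {w : ℂ} :
    w ∈ numericalRange (toEuclideanLin M) ↔
      ∃ φ : n → ℂ, star φ ⬝ᵥ φ = 1 ∧ star φ ⬝ᵥ (M *ᵥ φ) = w := by
  have hinner (φ : EuclideanSpace ℂ n) :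
      ⟪φ, toEuclideanLin M φ⟫_ℂ = star φ.ofLp ⬝ᵥ (M *ᵥ φ.ofLp) := by
    rw [toLpLin_apply, EuclideanSpace.inner_eq_star_dotProduct, dotProduct_comm]
  have hnorm (φ : EuclideanSpace ℂ n) : ‖φ‖ = 1 ↔ star φ.ofLp ⬝ᵥ φ.ofLp = 1 := by
    rw [dotProduct_comm, ← EuclideanSpace.inner_eq_star_dotProduct, inner_self_eq_norm_sq_to_K,
      ← RCLike.ofReal_pow, ← RCLike.ofReal_one (K := ℂ), RCLike.ofReal_inj]
    exact (pow_eq_one_iff_of_nonneg (norm_nonneg φ) two_ne_zero).symm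
  simp only [numericalRange, Set.mem_image, mem_sphere_zero_iff_norm, hnorm, hinner]
  exact (WithLp.equiv 2 (n → ℂ)).exists_congr_left

theorem IsDensity.trace_mul_mem_numericalRange [DecidableEq n] {ρ : Matrix n n ℂ} (hρ : IsDensity ρ)
    (M : Matrix n n ℂ) : (ρ * M).trace ∈ numericalRange (toEuclideanLin M) := by
  obtain ⟨hpos, htr⟩ := hρ
  have hsum : ∑ i, hpos.1.eigenvalues i = 1 := by
    rw [hpos.1.trace_eq_sum_eigenvalues] at htr
    exact RCLike.ofReal_injective (K := ℂ) (by simpa using htr)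
  rw [trace_mul_eq_sum_eigenvalues_mul_inner hpos.1]
  simpa only [Complex.real_smul] using!
    (convex_numericalRange (toEuclideanLin M)).sum_mem (t := Finset.univ)
      (fun i _ => hpos.eigenvalues_nonneg i) hsum
      (fun i _ => Set.mem_image_of_mem _
        (mem_sphere_zero_iff_norm.2 (hpos.1.eigenvectorBasis.norm_eq_one i)))

theorem isDensity_vecMulVec_self_star {φ : n → ℂ} (hφ : star φ ⬝ᵥ φ = 1) :
    IsDensity (vecMulVec φ (star φ)) :=
  ⟨posSemidef_vecMulVec_self_star φ, by rw [trace_vecMulVec, dotProduct_comm, hφ]⟩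

theorem exists_isDensity_trace_mul_eq_iff {M : Matrix n n ℂ} {w : ℂ} :
    (∃ ρ, IsDensity ρ ∧ (ρ * M).trace = w) ↔
      ∃ φ : n → ℂ, star φ ⬝ᵥ φ = 1 ∧ star φ ⬝ᵥ (M *ᵥ φ) = w := by
  classical
  constructor
  · rintro ⟨ρ, hρ, rfl⟩
    exact mem_numericalRange_toEuclideanLin_iff.1 (hρ.trace_mul_mem_numericalRange M)
  · rintro ⟨φ, hφ, rfl⟩
    refine ⟨vecMulVec φ (star φ), isDensity_vecMulVec_self_star hφ, ?_⟩
    rw [vecMulVec_mul, trace_vecMulVec, dotProduct_comm, ← dotProduct_mulVec]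

theorem mem_JNR_iff {k : ℕ} {A : Fin k → Matrix n n ℂ} (hA : ∀ i, (A i).IsHermitian)
    {x : Fin k → ℝ} : x ∈ JNR A ↔ ∃ ρ, IsDensity ρ ∧ ∀ i, (ρ * A i).trace = (x i : ℂ) := by
  refine exists_congr fun ρ => and_congr_right fun hρ =>
    funext_iff.trans (forall_congr' fun i => ?_)
  have him : (ρ * A i).trace.im = 0 := im_trace_mul_eq_zero_of_isHermitian hρ.1.1 (hA i)
  simp [wpt, Complex.ext_iff, him]

end DensityMatrix

theorem add_I_mul_eq_iff_of_im_eq_zero {z w : ℂ} (hz : z.im = 0) (hw : w.im = 0) {a b : ℝ} :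
    z + Complex.I * w = a + Complex.I * b ↔ z = a ∧ w = b := by
  simp [Complex.ext_iff, hz, hw]

theorem stmt14_general {n : Type*} [Fintype n] (A : Fin 2 → Matrix n n ℂ)
    (hA : ∀ i, (A i).IsHermitian) :
    JNR A = {x : Fin 2 → ℝ | ∃ φ : n → ℂ, star φ ⬝ᵥ φ = 1 ∧
      ∀ i, star φ ⬝ᵥ ((A i) *ᵥ φ) = (x i : ℂ)} := by
  ext x
  have htrace (ρ : Matrix n n ℂ) (hρ : IsDensity ρ) : (∀ i, (ρ * A i).trace = x i) ↔
      (ρ * (A 0 + Complex.I • A 1)).trace = x 0 + Complex.I * x 1 := by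
    rw [mul_add, Matrix.mul_smul, trace_add, trace_smul, smul_eq_mul, Fin.forall_fin_two]
    exact (add_I_mul_eq_iff_of_im_eq_zero (im_trace_mul_eq_zero_of_isHermitian hρ.1.1 (hA 0))
      (im_trace_mul_eq_zero_of_isHermitian hρ.1.1 (hA 1))).symm
  have hinner (φ : n → ℂ) : (∀ i, star φ ⬝ᵥ (A i *ᵥ φ) = x i) ↔
      star φ ⬝ᵥ ((A 0 + Complex.I • A 1) *ᵥ φ) = x 0 + Complex.I * x 1 := by
    rw [add_mulVec, smul_mulVec, dotProduct_add, dotProduct_smul, smul_eq_mul, Fin.forall_fin_two]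
    exact (add_I_mul_eq_iff_of_im_eq_zero ((hA 0).im_star_dotProduct_mulVec_self φ)
      ((hA 1).im_star_dotProduct_mulVec_self φ)).symm
  simp only [mem_JNR_iff hA, Set.mem_ofPred_eq, hinner, ← exists_isDensity_trace_mul_eq_iff]
  exact exists_congr fun ρ => and_congr_right (htrace ρ)

/-- the joint numerical range of two hermitian matrices equals
the set of pairs of expectation values at unit vectors. -/
theorem stmt14 {n : ℕ} (A : Fin 2 → Matrix (Fin n) (Fin n) ℂ)
    (hA : ∀ i, (A i).IsHermitian) :
    JNR A = {x : Fin 2 → ℝ | ∃ φ : Fin n → ℂ, star φ ⬝ᵥ φ = 1 ∧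
      ∀ i, star φ ⬝ᵥ ((A i) *ᵥ φ) = (x i : ℂ)} :=
  stmt14_general A hA
end
end
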